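/- arXiv:1909.10269 — 2 statements merged into one kernel-verified Lean document; each statement's English description precedes it below -/
import Mathlib

section
/- The quantity max_{[0,1]} u_ε = u_ε(1) is uniformly bounded as ε ↓ 0 (i.e. limsup_{ε↓0} u_ε(1) < ∞), and for each fixed s ∈ [0,1) one has |u_ε(s) − θ₀| + ε |u_ε'(s)| → 0 as ε ↓ 0. Moreover, if lim_{ε↓0} β_ε(1)/α_ε(1) = μ₀ for some constant μ₀ > 0, then u_ε(1) → p₀ and ε u_ε'(1) → e(p₀) as ε ↓ 0, where p₀ > θ₀ is the unique root of e(p₀) = √(2 μ₀ (F(p₀) − F(θ₀))). -/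
open Filter Set MeasureTheory

noncomputable section

/-- `g` is locally `τ`-Hölder continuous on `S`. -/
def LocHolderOn (τ : ℝ) (g : ℝ → ℝ) (S : Set ℝ) : Prop :=
  ∀ K : Set ℝ, K ⊆ S → IsCompact K →
    ∃ C : ℝ, ∀ x ∈ K, ∀ y ∈ K, |g x - g y| ≤ C * |x - y| ^ τ

/-- Assumption (A1): `f ∈ C^{1,τ}_loc`, `inf f' > 0`, `f θ₀ = 0`. -/
def A1 (τ θ₀ : ℝ) (f : ℝ → ℝ) : Prop :=
  ContDiff ℝ 1 f ∧ LocHolderOn τ (deriv f) Set.univ ∧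
    (∃ c > 0, ∀ t : ℝ, c ≤ deriv f t) ∧ f θ₀ = 0

/-- Assumption (A2): `e ∈ C^{1,τ}_loc`, decreasing and strictly positive. -/
def A2 (τ : ℝ) (e : ℝ → ℝ) : Prop :=
  ContDiff ℝ 1 e ∧ LocHolderOn τ (deriv e) Set.univ ∧ Antitone e ∧ ∀ t : ℝ, 0 < e t

/-- Assumption (A3) for the coefficient pair `(a, b)`, with parameter `kstar ∈ (0,1)`. -/
def A3 (N : ℕ) (τ kstar : ℝ) (a b : ℝ → ℝ) : Prop :=
  ContDiff ℝ 2 a ∧ ContDiff ℝ 1 b ∧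
  LocHolderOn τ (deriv (deriv a)) (Set.Ici 0) ∧ LocHolderOn τ (deriv b) (Set.Ici 0) ∧
  (∃ M : ℝ, ∀ r : ℝ, 0 ≤ r → a r ≤ M ∧ b r ≤ M) ∧
  (∃ c > 0, ∀ r : ℝ, 0 ≤ r → c ≤ a r ∧ c ≤ b r) ∧
  MonotoneOn (fun r : ℝ => r ^ (N - 1) * b r) (Set.Ioi 0) ∧
  kstar ∈ Set.Ioo (0:ℝ) 1 ∧
  (∃ L > 0, Tendsto
    (fun R : ℝ => sSup ((fun r : ℝ =>
      R * (|deriv a r| + |deriv b r|) + R ^ 2 * |deriv (deriv a) r|) '' Set.Ico (kstar * R) R))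
    atTop (nhds L))

/-- `U`, with derivative `U'`, is a solution of
`(r^{N-1} a U')' = r^{N-1} b f(U)` on `(0,R)`, `r^{N-1} a U' → 0` as `r → 0⁺`,
`U'(R) = e(U(R))`, of class `C¹((0,R]) ∩ C^∞((0,R))`, continuous up to `[0,R]`. -/
def IsSol (N : ℕ) (f e a b : ℝ → ℝ) (R : ℝ) (U U' : ℝ → ℝ) : Prop :=
  ContinuousOn U (Set.Icc 0 R) ∧
  (∀ r ∈ Set.Ioc (0:ℝ) R, HasDerivWithinAt U (U' r) (Set.Icc 0 R) r) ∧
  ContinuousOn U' (Set.Ioc 0 R) ∧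
  ContDiffOn ℝ (⊤ : ℕ∞) U (Set.Ioo 0 R) ∧
  (∀ r ∈ Set.Ioo (0:ℝ) R,
    HasDerivAt (fun s : ℝ => s ^ (N - 1) * a s * U' s) (r ^ (N - 1) * b r * f (U r)) r) ∧
  Tendsto (fun r : ℝ => r ^ (N - 1) * a r * U' r) (nhdsWithin 0 (Set.Ioi 0)) (nhds 0) ∧
  U' R = e (U R)

/-- The primitive `F(t) = ∫₀ᵗ f(s) ds`. -/
def Fo (f : ℝ → ℝ) (t : ℝ) : ℝ := ∫ s in (0:ℝ)..t, f s

/-- `u`, with derivative `u'`, is a solution of the rescaled singularly perturbed problem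
`ε² (u'' + ((N−1)/s + α_ε'/α_ε) u') = (β_ε/α_ε) f(u)` on `(0,1)`, `u'(0) = 0`,
`ε u'(1) = e(u(1))`, where `α_ε(s) = a(s/ε)`, `β_ε(s) = b(s/ε)`; it also records
the facts `u ≥ θ₀` and `u' ≥ 0` on `[0,1]`. -/
def IsSolE (N : ℕ) (f e a b : ℝ → ℝ) (θ₀ ε : ℝ) (u u' : ℝ → ℝ) : Prop :=
  ContinuousOn u (Set.Icc 0 1) ∧
  (∀ s ∈ Set.Ioc (0:ℝ) 1, HasDerivWithinAt u (u' s) (Set.Icc 0 1) s) ∧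
  ContinuousOn u' (Set.Ioc 0 1) ∧
  ContDiffOn ℝ (⊤ : ℕ∞) u (Set.Ioo 0 1) ∧
  (∀ s ∈ Set.Ioo (0:ℝ) 1, ∃ d : ℝ, HasDerivAt u' d s ∧
    ε ^ 2 * (d + (((N:ℝ) - 1) / s + deriv (fun t : ℝ => a (t / ε)) s / a (s / ε)) * u' s)
      = b (s / ε) / a (s / ε) * f (u s)) ∧
  u' 0 = 0 ∧
  ε * u' 1 = e (u 1) ∧
  (∀ s ∈ Set.Icc (0:ℝ) 1, θ₀ ≤ u s ∧ 0 ≤ u' s)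


/-- Basic derivative facts of a solution at an interior point. -/
lemma sol_hasDerivAt {N : ℕ} {f e a b : ℝ → ℝ} {θ₀ ε : ℝ} {u u' : ℝ → ℝ}
    (h : IsSolE N f e a b θ₀ ε u u') {s : ℝ} (hs : s ∈ Set.Ioo (0:ℝ) 1) :
    HasDerivAt u (u' s) s :=
  (h.2.1 s ⟨hs.1, hs.2.le⟩).hasDerivAt (Icc_mem_nhds hs.1 hs.2)

lemma scaled_hasDerivAt {a : ℝ → ℝ} (ha : Differentiable ℝ a) (ε s : ℝ) :
    HasDerivAt (fun t : ℝ => a (t / ε)) (deriv a (s / ε) / ε) s := by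
  have h1 : HasDerivAt (fun t : ℝ => t / ε) (1 / ε) s := (hasDerivAt_id s).div_const ε
  have h2 := (ha (s / ε)).hasDerivAt.comp s h1
  exact h2.congr_deriv (by ring)

lemma flux_hasDerivAt {N : ℕ} (hN : 2 ≤ N) {f e a b : ℝ → ℝ} {θ₀ ε : ℝ} {u u' : ℝ → ℝ}
    (hε : 0 < ε) (ha : Differentiable ℝ a) (hapos : ∀ r, 0 ≤ r → 0 < a r)
    (h : IsSolE N f e a b θ₀ ε u u') {s : ℝ} (hs : s ∈ Set.Ioo (0:ℝ) 1) :
    HasDerivAt (fun t : ℝ => t ^ (N - 1) * a (t / ε) * u' t)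
      (s ^ (N - 1) * b (s / ε) * f (u s) / ε ^ 2) s := by
  obtain ⟨d, hd, hode⟩ := h.2.2.2.2.1 s hs
  have hα := scaled_hasDerivAt ha ε s
  rw [hα.deriv] at hode
  have hA : 0 < a (s / ε) := hapos _ (div_nonneg hs.1.le hε.le)
  have hs0 : s ≠ 0 := hs.1.ne'
  have h1 := (((hasDerivAt_pow (N - 1) s).mul hα).mul hd)
  refine h1.congr_deriv ?_
  obtain ⟨n, rfl⟩ : ∃ n, N = n + 2 := ⟨N - 2, by omega⟩
  have e1 : n + 2 - 1 = n + 1 := by omega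
  have e2 : n + 1 - 1 = n := by omega
  simp only [e1, e2]
  push_cast at hode ⊢
  have hb : b (s / ε) * f (u s) / ε ^ 2 =
      a (s / ε) * (d + (((n:ℝ) + 2 - 1) / s + deriv a (s / ε) / ε / a (s / ε)) * u' s) := by
    have : b (s / ε) * f (u s) = a (s / ε) * (b (s / ε) / a (s / ε) * f (u s)) := by
      field_simp
    rw [this, ← hode]
    field_simp
  have : s ^ (n + 1) * b (s / ε) * f (u s) / ε ^ 2 =
      s ^ (n + 1) * (b (s / ε) * f (u s) / ε ^ 2) := by ring
  rw [this, hb]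
  simp only [Pi.mul_apply]
  field_simp
  ring

lemma flux_mono {N : ℕ} (hN : 2 ≤ N) {f e a b : ℝ → ℝ} {θ₀ ε : ℝ} {u u' : ℝ → ℝ}
    (hε : 0 < ε) (ha : Differentiable ℝ a) (hapos : ∀ r, 0 ≤ r → 0 < a r)
    (hbpos : ∀ r, 0 ≤ r → 0 < b r) (hfpos : ∀ t, θ₀ ≤ t → 0 ≤ f t)
    (h : IsSolE N f e a b θ₀ ε u u') :
    ContinuousOn (fun t : ℝ => t ^ (N - 1) * a (t / ε) * u' t) (Set.Ioc 0 1) ∧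
    MonotoneOn (fun t : ℝ => t ^ (N - 1) * a (t / ε) * u' t) (Set.Ioc 0 1) := by
  have hc : ContinuousOn (fun t : ℝ => t ^ (N - 1) * a (t / ε) * u' t) (Set.Ioc 0 1) := by
    refine ContinuousOn.mul (Continuous.continuousOn ?_) h.2.2.1
    exact (continuous_pow _).mul (ha.continuous.comp (continuous_id.div_const ε))
  refine ⟨hc, monotoneOn_of_deriv_nonneg (convex_Ioc 0 1) hc ?_ ?_⟩
  · rw [interior_Ioc]
    exact fun s hs => (flux_hasDerivAt hN hε ha hapos h hs).differentiableAt.differentiableWithinAt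
  · rw [interior_Ioc]
    intro s hs
    rw [(flux_hasDerivAt hN hε ha hapos h hs).deriv]
    have := hbpos _ (div_nonneg hs.1.le hε.le)
    have := hfpos _ (h.2.2.2.2.2.2.2 s ⟨hs.1.le, hs.2.le⟩).1
    have := hs.1.le
    positivity

lemma sol_mono {N : ℕ} {f e a b : ℝ → ℝ} {θ₀ ε : ℝ} {u u' : ℝ → ℝ}
    (h : IsSolE N f e a b θ₀ ε u u') : MonotoneOn u (Set.Icc 0 1) := by
  refine monotoneOn_of_deriv_nonneg (convex_Icc 0 1) h.1 ?_ ?_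
  · rw [interior_Icc]
    exact fun s hs => (sol_hasDerivAt h hs).differentiableAt.differentiableWithinAt
  · rw [interior_Icc]
    intro s hs
    rw [(sol_hasDerivAt h hs).deriv]
    exact (h.2.2.2.2.2.2.2 s ⟨hs.1.le, hs.2.le⟩).2

/-- Bound on the scaled derivative. -/
lemma sol_deriv_bound {N : ℕ} (hN : 2 ≤ N) {f e a b : ℝ → ℝ} {θ₀ ε m M : ℝ} {u u' : ℝ → ℝ}
    (hε : 0 < ε) (ha : Differentiable ℝ a) (hm : 0 < m) (hma : ∀ r, 0 ≤ r → m ≤ a r)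
    (hM : ∀ r, 0 ≤ r → a r ≤ M)
    (hbpos : ∀ r, 0 ≤ r → m ≤ b r) (hfpos : ∀ t, θ₀ ≤ t → 0 ≤ f t)
    (he : Antitone e) (he0 : ∀ t, 0 < e t)
    (h : IsSolE N f e a b θ₀ ε u u') {s : ℝ} (hs : s ∈ Set.Ioc (0:ℝ) 1) :
    ε * u' s ≤ M * e θ₀ / (m * s ^ (N - 1)) := by
  have hmono := (flux_mono hN hε ha (fun r hr => hm.trans_le (hma r hr))
    (fun r hr => hm.trans_le (hbpos r hr)) hfpos h).2 hs ⟨one_pos, le_rfl⟩ hs.2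
  simp only [one_pow, one_mul] at hmono
  have h1 : ε * u' 1 = e (u 1) := h.2.2.2.2.2.2.1
  have hu1 : θ₀ ≤ u 1 := (h.2.2.2.2.2.2.2 1 ⟨zero_le_one, le_rfl⟩).1
  have hus : 0 ≤ u' s := (h.2.2.2.2.2.2.2 s ⟨hs.1.le, hs.2⟩).2
  have hpow : 0 < s ^ (N - 1) := pow_pos hs.1 _
  have hA := hma _ (div_nonneg hs.1.le hε.le)
  rw [le_div_iff₀ (by positivity)]
  calc ε * u' s * (m * s ^ (N - 1)) ≤ ε * u' s * (a (s / ε) * s ^ (N - 1)) := by gcongr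
    _ = ε * (s ^ (N - 1) * a (s / ε) * u' s) := by ring
    _ ≤ ε * (a (1 / ε) * u' 1) := by gcongr
    _ = a (1 / ε) * e (u 1) := by rw [← h1]; ring
    _ ≤ M * e θ₀ := mul_le_mul (hM _ (by positivity)) (he hu1) (he0 _).le
        ((hm.trans_le (hma 0 le_rfl)).le.trans (hM 0 le_rfl))

/-- Interior bound on `f (u s)`. -/
lemma sol_f_bound {N : ℕ} (hN : 2 ≤ N) {f e a b : ℝ → ℝ} {θ₀ ε m M : ℝ} {u u' : ℝ → ℝ}
    (hε : 0 < ε) (ha : Differentiable ℝ a) (hm : 0 < m) (hma : ∀ r, 0 ≤ r → m ≤ a r)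
    (hM : ∀ r, 0 ≤ r → a r ≤ M)
    (hbpos : ∀ r, 0 ≤ r → m ≤ b r) (hfpos : ∀ t, θ₀ ≤ t → 0 ≤ f t) (hfm : Monotone f)
    (he : Antitone e) (he0 : ∀ t, 0 < e t)
    (h : IsSolE N f e a b θ₀ ε u u') {s : ℝ} (hs : s ∈ Set.Ioo (0:ℝ) 1) :
    f (u s) ≤ ε * (M * e θ₀ / (m * s ^ (N - 1) * (1 - s))) := by
  have hapos : ∀ r, 0 ≤ r → 0 < a r := fun r hr => hm.trans_le (hma r hr)
  have hc := (flux_mono hN hε ha hapos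
    (fun r hr => hm.trans_le (hbpos r hr)) hfpos h).1
  obtain ⟨x, hx, hxe⟩ := exists_hasDerivAt_eq_slope
    (fun t : ℝ => t ^ (N - 1) * a (t / ε) * u' t)
    (fun s => s ^ (N - 1) * b (s / ε) * f (u s) / ε ^ 2) hs.2
    (hc.mono (fun y hy => ⟨hs.1.trans_le hy.1, hy.2⟩))
    (fun y hy => flux_hasDerivAt hN hε ha hapos h ⟨hs.1.trans hy.1, hy.2⟩)
  have h1s : 0 < 1 - s := by linarith [hs.2]
  rw [eq_div_iff h1s.ne'] at hxe
  simp only [one_pow, one_mul] at hxe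
  have hx0 : 0 < x := hs.1.trans hx.1
  have hus : 0 ≤ u' s := (h.2.2.2.2.2.2.2 s ⟨hs.1.le, hs.2.le⟩).2
  have h1 : ε * u' 1 = e (u 1) := h.2.2.2.2.2.2.1
  have hu1 : θ₀ ≤ u 1 := (h.2.2.2.2.2.2.2 1 ⟨zero_le_one, le_rfl⟩).1
  have husx : u s ≤ u x := sol_mono h ⟨hs.1.le, hs.2.le⟩ ⟨hx0.le, hx.2.le⟩ hx.1.le
  have hf0 : 0 ≤ f (u s) := hfpos _ (h.2.2.2.2.2.2.2 s ⟨hs.1.le, hs.2.le⟩).1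
  have hpow : 0 < s ^ (N - 1) := pow_pos hs.1 _
  have hB := hbpos _ (div_nonneg hx0.le hε.le)
  have hA := hapos _ (div_nonneg hs.1.le hε.le)
  have h0 : s ^ (N - 1) * m * f (u s) / ε ^ 2 * (1 - s) ≤ a (1 / ε) * u' 1 := by
    calc s ^ (N - 1) * m * f (u s) / ε ^ 2 * (1 - s)
        ≤ x ^ (N - 1) * b (x / ε) * f (u x) / ε ^ 2 * (1 - s) := by
          have := hfm husx
          have := pow_le_pow_left₀ hs.1.le hx.1.le (N - 1)
          have : 0 ≤ x ^ (N - 1) * b (x / ε) := mul_nonneg (pow_pos hx0 _).le (hm.le.trans hB)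
          gcongr
      _ ≤ a (1 / ε) * u' 1 := by
          rw [hxe]
          have : 0 ≤ s ^ (N - 1) * a (s / ε) * u' s := by positivity
          linarith
  have h2 : ε * (a (1 / ε) * u' 1) ≤ M * e θ₀ := by
    calc ε * (a (1 / ε) * u' 1) = a (1 / ε) * e (u 1) := by rw [← h1]; ring
      _ ≤ M * e θ₀ := mul_le_mul (hM _ (by positivity)) (he hu1) (he0 _).le
        ((hm.trans_le (hma 0 le_rfl)).le.trans (hM 0 le_rfl))
  rw [← mul_div_assoc, le_div_iff₀ (by positivity)]
  calc f (u s) * (m * s ^ (N - 1) * (1 - s))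
      = ε * (ε * (s ^ (N - 1) * m * f (u s) / ε ^ 2 * (1 - s))) := by field_simp
    _ ≤ ε * (ε * (a (1 / ε) * u' 1)) := by gcongr
    _ ≤ ε * (M * e θ₀) := by gcongr

lemma Fo_hasDerivAt {f : ℝ → ℝ} (hf : Continuous f) (t : ℝ) : HasDerivAt (Fo f) (f t) t :=
  intervalIntegral.integral_hasDerivAt_right (hf.intervalIntegrable _ _)
    (hf.stronglyMeasurableAtFilter _ _) hf.continuousAt

/-- Energy derivative and its bound. -/
lemma energy_hasDerivAt {N : ℕ} {f e a b : ℝ → ℝ} {θ₀ ε m M : ℝ} {u u' : ℝ → ℝ}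
    (hN : 2 ≤ N) (hε : 0 < ε) (ha : Differentiable ℝ a) (hb : Differentiable ℝ b)
    (hm : 0 < m) (hma : ∀ r, 0 ≤ r → m ≤ a r ∧ m ≤ b r)
    (hM : ∀ r, 0 ≤ r → a r ≤ M ∧ b r ≤ M) (hfc : Continuous f)
    (h : IsSolE N f e a b θ₀ ε u u') {s k K V W : ℝ} (hs : s ∈ Set.Ioo (0:ℝ) 1)
    (hk : 0 < k) (hks : k ≤ s) (hKa : |deriv a (s / ε) / ε| ≤ K)
    (hKb : |deriv b (s / ε) / ε| ≤ K) (hV : ε * u' s ≤ V)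
    (hW0 : 0 ≤ Fo f (u s) - Fo f θ₀) (hW : Fo f (u s) - Fo f θ₀ ≤ W) :
    ∃ D, HasDerivAt (fun t : ℝ => (ε * u' t) ^ 2 / 2
      - b (t / ε) / a (t / ε) * (Fo f (u t) - Fo f θ₀)) D s ∧
      |D| ≤ (((N:ℝ) - 1) / k + K / m) * V ^ 2 + (K * M + M * K) / m ^ 2 * W := by
  obtain ⟨d, hd, hode⟩ := h.2.2.2.2.1 s hs
  have hα := scaled_hasDerivAt ha ε s
  have hβ := scaled_hasDerivAt hb ε s
  rw [hα.deriv] at hode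
  have hr : 0 ≤ s / ε := div_nonneg hs.1.le hε.le
  have hA : 0 < a (s / ε) := hm.trans_le (hma _ hr).1
  have hB : 0 < b (s / ε) := hm.trans_le (hma _ hr).2
  have hv0 : 0 ≤ ε * u' s := mul_nonneg hε.le (h.2.2.2.2.2.2.2 s ⟨hs.1.le, hs.2.le⟩).2
  have hG := ((Fo_hasDerivAt hfc (u s)).comp s (sol_hasDerivAt h hs)).sub_const (Fo f θ₀)
  have h1 := (((hd.const_mul ε).pow 2).div_const 2).sub ((hβ.div hα hA.ne').mul hG)
  refine ⟨_, h1, ?_⟩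
  simp only [Function.comp_apply, Pi.div_apply]
  set A := a (s / ε)
  set B := b (s / ε)
  set a1 := deriv a (s / ε) / ε
  set b1 := deriv b (s / ε) / ε
  set G := Fo f (u s) - Fo f θ₀
  set v := ε * u' s with hv
  have key : (2:ℕ) * v ^ (2 - 1) * (ε * d) / 2
      - ((b1 * A - B * a1) / A ^ 2 * G + B / A * (f (u s) * u' s)) =
      -((((N:ℝ) - 1) / s + a1 / A) * v ^ 2) - (b1 * A - B * a1) / A ^ 2 * G := by
    have : B / A * (f (u s) * u' s) = (B / A * f (u s)) * u' s := by ring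
    rw [this, ← hode, hv]
    push_cast
    ring
  refine le_trans (le_of_eq (congrArg _ key)) ?_
  have hN1 : (0:ℝ) ≤ (N:ℝ) - 1 := by
    have : (2:ℝ) ≤ N := by exact_mod_cast hN
    linarith
  have hK0 : 0 ≤ K := (abs_nonneg _).trans hKa
  have hM0 : 0 < M := hA.trans_le (hM _ hr).1
  have hmA : m ≤ A := (hma _ hr).1
  have c1 : |((N:ℝ) - 1) / s + a1 / A| ≤ ((N:ℝ) - 1) / k + K / m := by
    refine (abs_add_le _ _).trans (add_le_add ?_ ?_)
    · rw [abs_of_nonneg (div_nonneg hN1 hs.1.le)]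
      gcongr
    · rw [abs_div, abs_of_pos hA]
      gcongr
  have c2 : |(b1 * A - B * a1) / A ^ 2| ≤ (K * M + M * K) / m ^ 2 := by
    rw [abs_div, abs_of_pos (pow_pos hA 2)]
    have : |b1 * A - B * a1| ≤ K * M + M * K := by
      refine (abs_sub _ _).trans (add_le_add ?_ ?_)
      · rw [abs_mul, abs_of_pos hA]
        exact mul_le_mul hKb (hM _ hr).1 hA.le hK0
      · rw [abs_mul, abs_of_pos hB]
        exact mul_le_mul (hM _ hr).2 hKa (abs_nonneg _) hM0.le
    gcongr
  calc _ ≤ |-((((N:ℝ) - 1) / s + a1 / A) * v ^ 2)| + |(b1 * A - B * a1) / A ^ 2 * G| :=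
        abs_sub _ _
    _ = |((N:ℝ) - 1) / s + a1 / A| * v ^ 2 + |(b1 * A - B * a1) / A ^ 2| * G := by
        rw [abs_neg, abs_mul, abs_mul, abs_of_nonneg (sq_nonneg v), abs_of_nonneg hW0]
    _ ≤ _ := by
        have : 0 ≤ ((N:ℝ) - 1) / k + K / m := (abs_nonneg _).trans c1
        have : 0 ≤ (K * M + M * K) / m ^ 2 := (abs_nonneg _).trans c2
        gcongr

/-- Assumption (A3) gives uniform bounds on the scaled derivatives near the boundary. -/
lemma coeff_bound {N : ℕ} {τ kstar : ℝ} {a b : ℝ → ℝ} (hab : A3 N τ kstar a b) :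
    ∃ K : ℝ, ∀ᶠ ε in nhdsWithin (0:ℝ) (Set.Ioi 0), ∀ s ∈ Set.Ico kstar 1,
      |deriv a (s / ε) / ε| ≤ K ∧ |deriv b (s / ε) / ε| ≤ K := by
  obtain ⟨ha, hb, -, -, -, -, -, hk, L, hL, hT⟩ := hab
  have ha1 : ContDiff ℝ 1 (deriv a) := by
    have : ContDiff ℝ (1 + 1) a := by simpa [one_add_one_eq_two] using ha
    exact (contDiff_succ_iff_deriv.1 this).2.2
  have ca : Continuous (deriv a) := ha1.continuous
  have ca2 : Continuous (deriv (deriv a)) := ha1.continuous_deriv le_rfl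
  have cb : Continuous (deriv b) := hb.continuous_deriv le_rfl
  refine ⟨L + 1, ?_⟩
  have hev := hT.eventually (gt_mem_nhds (show L < L + 1 by linarith))
  filter_upwards [tendsto_inv_nhdsGT_zero.eventually hev, self_mem_nhdsWithin] with ε h1 hε s hs
  have hε : 0 < ε := hε
  have hR : 0 < ε⁻¹ := inv_pos.2 hε
  have hc : Continuous (fun r : ℝ => ε⁻¹ * (|deriv a r| + |deriv b r|)
      + ε⁻¹ ^ 2 * |deriv (deriv a) r|) := by fun_prop
  have hbdd : BddAbove ((fun r : ℝ => ε⁻¹ * (|deriv a r| + |deriv b r|)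
      + ε⁻¹ ^ 2 * |deriv (deriv a) r|) '' Set.Ico (kstar * ε⁻¹) ε⁻¹) :=
    ((isCompact_Icc (a := kstar * ε⁻¹) (b := ε⁻¹)).image hc).bddAbove.mono
      (Set.image_mono Set.Ico_subset_Icc_self)
  have hmem : s / ε ∈ Set.Ico (kstar * ε⁻¹) ε⁻¹ := by
    rw [div_eq_mul_inv]
    exact ⟨by gcongr; exact hs.1, by nlinarith [hs.2]⟩
  have h2 := (le_csSup hbdd (Set.mem_image_of_mem _ hmem)).trans h1.le
  beta_reduce at h2
  have p1 : 0 ≤ ε⁻¹ * |deriv a (s / ε)| := by positivity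
  have p2 : 0 ≤ ε⁻¹ * |deriv b (s / ε)| := by positivity
  have p3 : 0 ≤ ε⁻¹ ^ 2 * |deriv (deriv a) (s / ε)| := by positivity
  constructor
  · rw [div_eq_inv_mul, abs_mul, abs_of_pos hR]; nlinarith
  · rw [div_eq_inv_mul, abs_mul, abs_of_pos hR]; nlinarith

/-- `u_ε(1) = max u_ε` is uniformly bounded, interior decay, and the
leading boundary asymptotics `u_ε(1) → p₀`, `ε u_ε'(1) → e(p₀)` when `β_ε(1)/α_ε(1) → μ₀`. -/
theorem stmt_16 (N : ℕ) (hN : 2 ≤ N) (τ θ₀ kstar μ₀ p₀ : ℝ) (hτ : τ ∈ Set.Ioo (0:ℝ) 1)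
    (f e a b : ℝ → ℝ) (hf : A1 τ θ₀ f) (he : A2 τ e) (hab : A3 N τ kstar a b)
    (hμ : 0 < μ₀)
    (hp : θ₀ < p₀) (hpe : e p₀ = Real.sqrt (2 * μ₀ * (Fo f p₀ - Fo f θ₀)))
    (u u' : ℝ → ℝ → ℝ)
    (hu : ∀ ε > 0, IsSolE N f e a b θ₀ ε (u ε) (u' ε)) :
    (∀ ε > 0, ∀ s ∈ Set.Icc (0:ℝ) 1, u ε s ≤ u ε 1) ∧
    (∃ M : ℝ, ∀ᶠ ε in nhdsWithin (0:ℝ) (Set.Ioi 0), u ε 1 ≤ M) ∧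
    (∀ s ∈ Set.Ico (0:ℝ) 1,
      Tendsto (fun ε : ℝ => |u ε s - θ₀| + ε * |u' ε s|)
        (nhdsWithin (0:ℝ) (Set.Ioi 0)) (nhds 0)) ∧
    (Tendsto (fun ε : ℝ => b (1 / ε) / a (1 / ε))
        (nhdsWithin (0:ℝ) (Set.Ioi 0)) (nhds μ₀) →
      Tendsto (fun ε : ℝ => u ε 1) (nhdsWithin (0:ℝ) (Set.Ioi 0)) (nhds p₀) ∧
      Tendsto (fun ε : ℝ => ε * u' ε 1) (nhdsWithin (0:ℝ) (Set.Ioi 0)) (nhds (e p₀))) := by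
  classical
  obtain ⟨hf1, -, ⟨c0, hc0, hc0f⟩, hfθ⟩ := hf
  obtain ⟨he1, -, heanti, hepos⟩ := he
  have hab' := hab
  obtain ⟨ha2, hb1, -, -, ⟨M, hM⟩, ⟨m, hm, hma⟩, -, hk, -⟩ := hab'
  have had : Differentiable ℝ a := ha2.differentiable (by norm_num)
  have hbd : Differentiable ℝ b := hb1.differentiable (by norm_num)
  have hfd : Differentiable ℝ f := hf1.differentiable (by norm_num)
  have hfc : Continuous f := hfd.continuous
  have hec : Continuous e := he1.continuous
  have hfm : StrictMono f := strictMono_of_deriv_pos fun t => hc0.trans_le (hc0f t)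
  have hfpos : ∀ t, θ₀ ≤ t → 0 ≤ f t := fun t ht => hfθ ▸ hfm.monotone ht
  have hflow : ∀ t, θ₀ ≤ t → c0 * (t - θ₀) ≤ f t := by
    intro t ht
    have := (convex_univ (𝕜 := ℝ) (E := ℝ)).mul_sub_le_image_sub_of_le_deriv
      hfc.continuousOn hfd.differentiableOn (fun x _ => hc0f x) θ₀ trivial t trivial ht
    linarith
  have hM0 : 0 < M := hm.trans_le ((hma 0 le_rfl).1.trans (hM 0 le_rfl).1)
  have hma1 : ∀ r, 0 ≤ r → m ≤ a r := fun r hr => (hma r hr).1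
  have hma2 : ∀ r, 0 ≤ r → m ≤ b r := fun r hr => (hma r hr).2
  have hM1 : ∀ r, 0 ≤ r → a r ≤ M := fun r hr => (hM r hr).1
  have hmono : ∀ ε > 0, MonotoneOn (u ε) (Set.Icc 0 1) := fun ε hε => sol_mono (hu ε hε)
  have hge : ∀ ε > 0, ∀ s ∈ Set.Icc (0:ℝ) 1, θ₀ ≤ u ε s ∧ 0 ≤ u' ε s :=
    fun ε hε => (hu ε hε).2.2.2.2.2.2.2
  have hdb : ∀ ε > 0, ∀ s ∈ Set.Ioc (0:ℝ) 1, ε * u' ε s ≤ M * e θ₀ / (m * s ^ (N - 1)) :=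
    fun ε hε s hs => sol_deriv_bound hN hε had hm hma1 hM1 hma2 hfpos heanti hepos (hu ε hε) hs
  have hub : ∀ ε > 0, ∀ s ∈ Set.Ioo (0:ℝ) 1,
      u ε s - θ₀ ≤ ε * (M * e θ₀ / (m * s ^ (N - 1) * (1 - s))) / c0 := by
    intro ε hε s hs
    have h1 := sol_f_bound hN hε had hm hma1 hM1 hma2 hfpos hfm.monotone heanti hepos (hu ε hε) hs
    have h2 := hflow _ (hge ε hε s ⟨hs.1.le, hs.2.le⟩).1
    rw [le_div_iff₀ hc0]
    linarith
  have heθ : 0 < e θ₀ := hepos θ₀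
  -- uniform bound
  set B₀ : ℝ := θ₀ + M * e θ₀ / (m * (1 / 2) ^ (N - 1)) / c0
    + M * e θ₀ / (m * (1 / 2) ^ (N - 1)) with hB₀
  have hbound : ∀ᶠ ε in nhdsWithin (0:ℝ) (Set.Ioi 0), u ε 1 ≤ B₀ := by
    have : Set.Ioo (0:ℝ) (1 / 2) ∈ nhdsWithin (0:ℝ) (Set.Ioi 0) :=
      Ioo_mem_nhdsGT (by norm_num)
    filter_upwards [this] with ε hε
    have hε0 : 0 < ε := hε.1
    have hε2 : ε < 1 / 2 := hε.2
    have hpw : ∀ s : ℝ, 1 / 2 ≤ s → (1 / 2 : ℝ) ^ (N - 1) ≤ s ^ (N - 1) :=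
      fun s hs => pow_le_pow_left₀ (by norm_num) hs _
    have hlt : 1 - ε < 1 := by linarith
    obtain ⟨x, hx, hxe⟩ := exists_hasDerivAt_eq_slope (u ε) (u' ε) hlt
      ((hu ε hε0).1.mono (Set.Icc_subset_Icc (by linarith) le_rfl))
      (fun y hy => sol_hasDerivAt (hu ε hε0) ⟨by linarith [hy.1], hy.2⟩)
    rw [eq_div_iff (by linarith)] at hxe
    have h1 := hdb ε hε0 x ⟨by linarith [hx.1], hx.2.le⟩
    have h2 := hub ε hε0 (1 - ε) ⟨by linarith, hlt⟩
    have h3 : M * e θ₀ / (m * x ^ (N - 1)) ≤ M * e θ₀ / (m * (1 / 2) ^ (N - 1)) := by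
      have := hpw x (by linarith [hx.1])
      gcongr
    have h4 : ε * (M * e θ₀ / (m * (1 - ε) ^ (N - 1) * (1 - (1 - ε)))) / c0
        ≤ M * e θ₀ / (m * (1 / 2) ^ (N - 1)) / c0 := by
      have hp := hpw (1 - ε) (by linarith)
      have hp0 : 0 < (1 - ε) ^ (N - 1) := pow_pos (by linarith) _
      have : ε * (M * e θ₀ / (m * (1 - ε) ^ (N - 1) * (1 - (1 - ε))))
          = M * e θ₀ / (m * (1 - ε) ^ (N - 1)) := by
        have : 1 - (1 - ε) = ε := by ring
        rw [this]
        field_simp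
      rw [this]
      gcongr
    rw [hB₀]
    nlinarith
  have hid : Tendsto (fun ε : ℝ => ε) (nhdsWithin (0:ℝ) (Set.Ioi 0)) (nhds 0) :=
    tendsto_nhdsWithin_of_tendsto_nhds tendsto_id
  have hpos : ∀ᶠ ε in nhdsWithin (0:ℝ) (Set.Ioi 0), 0 < ε := self_mem_nhdsWithin
  -- interior convergence
  have hint : ∀ s ∈ Set.Ioo (0:ℝ) 1,
      Tendsto (fun ε : ℝ => u ε s) (nhdsWithin (0:ℝ) (Set.Ioi 0)) (nhds θ₀) := by
    intro s hs
    have hlim : Tendsto (fun ε : ℝ => θ₀ + ε * (M * e θ₀ / (m * s ^ (N - 1) * (1 - s))) / c0)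
        (nhdsWithin (0:ℝ) (Set.Ioi 0)) (nhds θ₀) := by
      have := ((hid.mul_const (M * e θ₀ / (m * s ^ (N - 1) * (1 - s)))).div_const c0).const_add θ₀
      simpa using this
    refine tendsto_of_tendsto_of_tendsto_of_le_of_le' tendsto_const_nhds hlim ?_ ?_
    · filter_upwards [hpos] with ε hε using (hge ε hε s ⟨hs.1.le, hs.2.le⟩).1
    · filter_upwards [hpos] with ε hε
      linarith [hub ε hε s hs]
  have hintd : ∀ s ∈ Set.Ioo (0:ℝ) 1,
      Tendsto (fun ε : ℝ => ε * u' ε s) (nhdsWithin (0:ℝ) (Set.Ioi 0)) (nhds 0) := by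
    intro s hs
    set t : ℝ := (s + 1) / 2 with ht
    have hst : s < t := by rw [ht]; linarith [hs.2]
    have ht1 : t < 1 := by rw [ht]; linarith [hs.2]
    have ht0 : 0 < t := hs.1.trans hst
    have hlim : Tendsto (fun ε : ℝ => ε * (M * ((u ε t - θ₀) / (t - s)) / (m * s ^ (N - 1))))
        (nhdsWithin (0:ℝ) (Set.Ioi 0)) (nhds 0) := by
      have := hid.mul ((((((hint t ⟨ht0, ht1⟩).sub_const θ₀).div_const (t - s)).const_mul M).div_const
        (m * s ^ (N - 1))))
      simpa using this
    refine tendsto_of_tendsto_of_tendsto_of_le_of_le' tendsto_const_nhds hlim ?_ ?_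
    · filter_upwards [hpos] with ε hε
      exact mul_nonneg hε.le (hge ε hε s ⟨hs.1.le, hs.2.le⟩).2
    · filter_upwards [hpos] with ε hε
      obtain ⟨x, hx, hxe⟩ := exists_hasDerivAt_eq_slope (u ε) (u' ε) hst
        ((hu ε hε).1.mono (Set.Icc_subset_Icc hs.1.le ht1.le))
        (fun y hy => sol_hasDerivAt (hu ε hε) ⟨hs.1.trans hy.1, hy.2.trans ht1⟩)
      have hx0 : 0 < x := hs.1.trans hx.1
      have hx1 : x < 1 := hx.2.trans ht1
      have hfl := (flux_mono hN hε had (fun r hr => hm.trans_le (hma1 r hr))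
        (fun r hr => hm.trans_le (hma2 r hr)) hfpos (hu ε hε)).2 ⟨hs.1, hs.2.le⟩
        ⟨hx0, hx1.le⟩ hx.1.le
      simp only at hfl
      have hus := (hge ε hε s ⟨hs.1.le, hs.2.le⟩)
      have hux := (hge ε hε x ⟨hx0.le, hx1.le⟩)
      have hpw : 0 < s ^ (N - 1) := pow_pos hs.1 _
      have hts : 0 < t - s := by linarith
      have hxA := hM1 _ (div_nonneg hx0.le hε.le)
      have hxA0 := hm.trans_le (hma1 _ (div_nonneg hx0.le hε.le))
      have hsA := hma1 _ (div_nonneg hs.1.le hε.le)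
      refine mul_le_mul_of_nonneg_left ?_ hε.le
      rw [le_div_iff₀ (by positivity)]
      have hxp : x ^ (N - 1) ≤ 1 := pow_le_one₀ hx0.le hx1.le
      have hxp0 : 0 < x ^ (N - 1) := pow_pos hx0 _
      calc u' ε s * (m * s ^ (N - 1)) ≤ u' ε s * (a (s / ε) * s ^ (N - 1)) := by
            have := hus.2
            gcongr
        _ = s ^ (N - 1) * a (s / ε) * u' ε s := by ring
        _ ≤ x ^ (N - 1) * a (x / ε) * u' ε x := hfl
        _ ≤ 1 * M * u' ε x := by
            have := hux.2
            gcongr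
        _ = M * ((u ε t - u ε s) / (t - s)) := by rw [hxe]; ring
        _ ≤ M * ((u ε t - θ₀) / (t - s)) := by
            have := hus.1
            gcongr
  refine ⟨fun ε hε s hs => hmono ε hε hs ⟨zero_le_one, le_rfl⟩ hs.2, ⟨B₀, hbound⟩, ?_, ?_⟩
  · intro s hs
    rcases hs.1.eq_or_lt with h0 | h0
    · subst h0
      have h1 := (hint (1 / 2) ⟨by norm_num, by norm_num⟩).sub_const θ₀
      rw [sub_self] at h1
      refine tendsto_of_tendsto_of_tendsto_of_le_of_le' tendsto_const_nhds h1 ?_ ?_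
      · filter_upwards [hpos] with ε hε
        positivity
      · filter_upwards [hpos] with ε hε
        have h2 : u' ε 0 = 0 := (hu ε hε).2.2.2.2.2.1
        have h3 := (hge ε hε 0 ⟨le_rfl, zero_le_one⟩).1
        have h4 := hmono ε hε ⟨le_rfl, zero_le_one⟩
          (show (1 / 2 : ℝ) ∈ Set.Icc (0:ℝ) 1 from ⟨by norm_num, by norm_num⟩) (by norm_num)
        rw [h2, abs_zero, mul_zero, add_zero, abs_of_nonneg (by linarith)]
        linarith
    · have h1 := ((hint s ⟨h0, hs.2⟩).sub_const θ₀).add (hintd s ⟨h0, hs.2⟩)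
      rw [sub_self, add_zero] at h1
      refine h1.congr' ?_
      filter_upwards [hpos] with ε hε
      have h3 := hge ε hε s ⟨hs.1, hs.2.le⟩
      rw [abs_of_nonneg (by linarith [h3.1]), abs_of_nonneg h3.2]
  · intro hμlim
    have hFd : Differentiable ℝ (Fo f) := fun t => (Fo_hasDerivAt hfc t).differentiableAt
    have hFc : Continuous (Fo f) := hFd.continuous
    have hFm : StrictMonoOn (Fo f) (Set.Ici θ₀) := by
      refine strictMonoOn_of_deriv_pos (convex_Ici θ₀) hFc.continuousOn ?_
      rw [interior_Ici]
      intro t ht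
      rw [(Fo_hasDerivAt hfc t).deriv, ← hfθ]
      exact hfm ht
    obtain ⟨K, hK⟩ := coeff_bound hab
    set V : ℝ := M * e θ₀ / (m * kstar ^ (N - 1)) with hV
    set W : ℝ := Fo f B₀ - Fo f θ₀ with hW
    set C : ℝ := (((N:ℝ) - 1) / kstar + K / m) * V ^ 2 + (K * M + M * K) / m ^ 2 * W with hC
    let E : ℝ → ℝ → ℝ := fun ε t => (ε * u' ε t) ^ 2 / 2
      - b (t / ε) / a (t / ε) * (Fo f (u ε t) - Fo f θ₀)
    have hratio : ∀ ε > 0, ∀ t, 0 ≤ t → |b (t / ε) / a (t / ε)| ≤ M / m := by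
      intro ε hε t ht
      have hr : 0 ≤ t / ε := div_nonneg ht hε.le
      rw [abs_of_nonneg (div_nonneg (hm.le.trans (hma2 _ hr)) (hm.le.trans (hma1 _ hr)))]
      have := hma1 _ hr
      have := (hM _ hr).2
      gcongr
    -- the energy increment
    have hinc : ∀ s ∈ Set.Ico kstar 1, ∀ᶠ ε in nhdsWithin (0:ℝ) (Set.Ioi 0),
        |E ε 1 - E ε s| ≤ C * (1 - s) := by
      intro s hs
      have hs0 : 0 < s := hk.1.trans_le hs.1
      filter_upwards [hpos, hK, hbound] with ε hε hKε hB
      have hcont : ContinuousOn (E ε) (Set.Icc s 1) := by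
        have hsub : Set.Icc s 1 ⊆ Set.Ioc 0 1 := fun y hy => ⟨hs0.trans_le hy.1, hy.2⟩
        have hu'c : ContinuousOn (u' ε) (Set.Icc s 1) := (hu ε hε).2.2.1.mono hsub
        have huc : ContinuousOn (u ε) (Set.Icc s 1) :=
          (hu ε hε).1.mono (Set.Icc_subset_Icc hs0.le le_rfl)
        have hac : Continuous (fun t : ℝ => a (t / ε)) :=
          had.continuous.comp (continuous_id.div_const ε)
        have hbc : Continuous (fun t : ℝ => b (t / ε)) :=
          hbd.continuous.comp (continuous_id.div_const ε)
        refine (((continuousOn_const.mul hu'c).pow 2).div_const 2).sub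
          ((hbc.continuousOn.div hac.continuousOn ?_).mul
            ((hFc.comp_continuousOn huc).sub continuousOn_const))
        intro y hy
        exact (hm.trans_le (hma1 _ (div_nonneg (hs0.le.trans hy.1) hε.le))).ne'
      have hD : ∀ y ∈ Set.Ioo s 1, ∃ D, HasDerivAt (E ε) D y ∧ |D| ≤ C := by
        intro y hy
        have hy0 : 0 < y := hs0.trans hy.1
        have hyk : kstar ≤ y := hs.1.trans hy.1.le
        have hKy := hKε y ⟨hyk, hy.2⟩
        have huy := (hge ε hε y ⟨hy0.le, hy.2.le⟩).1
        have huB : u ε y ≤ B₀ :=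
          (hmono ε hε ⟨hy0.le, hy.2.le⟩ ⟨zero_le_one, le_rfl⟩ hy.2.le).trans hB
        have hVy : ε * u' ε y ≤ V := by
          refine (hdb ε hε y ⟨hy0, hy.2.le⟩).trans ?_
          have := pow_le_pow_left₀ hk.1.le hyk (N - 1)
          have := pow_pos hk.1 (N - 1)
          rw [hV]
          gcongr
        refine energy_hasDerivAt hN hε had hbd hm hma hM hfc (hu ε hε) ⟨hy0, hy.2⟩
          hk.1 hyk hKy.1 hKy.2 hVy ?_ ?_
        · exact sub_nonneg.2 (hFm.monotoneOn Set.self_mem_Ici huy huy)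
        · exact sub_le_sub_right (hFm.monotoneOn huy (huy.trans huB) huB) _
      choose! D hD1 hD2 using hD
      obtain ⟨x, hx, hxe⟩ := exists_hasDerivAt_eq_slope (E ε) D hs.2 hcont hD1
      have h1s : 0 < 1 - s := by linarith [hs.2]
      rw [eq_div_iff h1s.ne'] at hxe
      rw [← hxe, abs_mul, abs_of_pos h1s]
      exact mul_le_mul_of_nonneg_right (hD2 x hx) h1s.le
    have hEs : ∀ s ∈ Set.Ico kstar 1,
        Tendsto (fun ε => E ε s) (nhdsWithin (0:ℝ) (Set.Ioi 0)) (nhds 0) := by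
      intro s hs
      have hs0 : 0 < s := hk.1.trans_le hs.1
      have h1 : Tendsto (fun ε => (ε * u' ε s) ^ 2 / 2) (nhdsWithin (0:ℝ) (Set.Ioi 0))
          (nhds 0) := by
        simpa using ((hintd s ⟨hs0, hs.2⟩).pow 2).div_const 2
      have h2 : Tendsto (fun ε => Fo f (u ε s) - Fo f θ₀) (nhdsWithin (0:ℝ) (Set.Ioi 0))
          (nhds 0) := by
        simpa using ((hFc.tendsto θ₀).comp (hint s ⟨hs0, hs.2⟩)).sub_const (Fo f θ₀)
      have h3 : Tendsto (fun ε => b (s / ε) / a (s / ε) * (Fo f (u ε s) - Fo f θ₀))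
          (nhdsWithin (0:ℝ) (Set.Ioi 0)) (nhds 0) := by
        refine squeeze_zero_norm' (a := fun ε => M / m * |Fo f (u ε s) - Fo f θ₀|) ?_ ?_
        · filter_upwards [hpos] with ε hε
          rw [Real.norm_eq_abs, abs_mul]
          exact mul_le_mul_of_nonneg_right (hratio ε hε s hs0.le) (abs_nonneg _)
        · simpa using h2.abs.const_mul (M / m)
      simpa using h1.sub h3
    have hE1 : Tendsto (fun ε => E ε 1) (nhdsWithin (0:ℝ) (Set.Ioi 0)) (nhds 0) := by
      rw [Metric.tendsto_nhds]
      intro δ hδ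
      obtain ⟨s, hs, hCs⟩ : ∃ s ∈ Set.Ico kstar 1, C * (1 - s) < δ / 2 := by
        have hcs : Tendsto (fun s : ℝ => C * (1 - s)) (nhdsWithin 1 (Set.Iio 1)) (nhds 0) := by
          have : Continuous (fun s : ℝ => C * (1 - s)) := by fun_prop
          have h := this.tendsto 1
          simp only [sub_self, mul_zero] at h
          exact tendsto_nhdsWithin_of_tendsto_nhds h
        have hev := hcs.eventually (gt_mem_nhds (half_pos hδ))
        have hI : Set.Ico kstar 1 ∈ nhdsWithin (1:ℝ) (Set.Iio 1) := Ico_mem_nhdsLT hk.2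
        obtain ⟨s, h1, h2⟩ := (hev.and hI).exists
        exact ⟨s, h2, h1⟩
      filter_upwards [hinc s hs, (Metric.tendsto_nhds.1 (hEs s hs)) (δ / 2) (half_pos hδ)]
        with ε h1 h2
      rw [Real.dist_eq, sub_zero] at h2 ⊢
      calc |E ε 1| = |(E ε 1 - E ε s) + E ε s| := by ring_nf
        _ ≤ |E ε 1 - E ε s| + |E ε s| := abs_add_le _ _
        _ < δ := by linarith
    -- pass to the limit coefficient
    let Φ : ℝ → ℝ := fun p => μ₀ * (Fo f p - Fo f θ₀) - e p ^ 2 / 2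
    have hΦlim : Tendsto (fun ε => Φ (u ε 1)) (nhdsWithin (0:ℝ) (Set.Ioi 0)) (nhds 0) := by
      have h1 : Tendsto (fun ε => (μ₀ - b (1 / ε) / a (1 / ε)) * (Fo f (u ε 1) - Fo f θ₀))
          (nhdsWithin (0:ℝ) (Set.Ioi 0)) (nhds 0) := by
        refine squeeze_zero_norm' (a := fun ε => |μ₀ - b (1 / ε) / a (1 / ε)| * W) ?_ ?_
        · filter_upwards [hpos, hbound] with ε hε hB
          have hu1 := (hge ε hε 1 ⟨zero_le_one, le_rfl⟩).1
          have g1 := hFm.monotoneOn Set.self_mem_Ici hu1 hu1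
          have g2 := hFm.monotoneOn hu1 (hu1.trans hB) hB
          rw [Real.norm_eq_abs, abs_mul]
          refine mul_le_mul_of_nonneg_left ?_ (abs_nonneg _)
          rw [abs_of_nonneg (by linarith)]
          linarith
        · have := ((hμlim.const_sub μ₀).abs).mul_const W
          simpa using this
      have h2 := h1.sub hE1
      rw [sub_zero] at h2
      refine h2.congr' ?_
      filter_upwards [hpos] with ε hε
      have hbc : ε * u' ε 1 = e (u ε 1) := (hu ε hε).2.2.2.2.2.2.1
      simp only [E, Φ, hbc]
      ring
    have hΦm : StrictMonoOn Φ (Set.Ici θ₀) := by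
      intro x hx y hy hxy
      have h1 := hFm hx hy hxy
      have h2 : e y ^ 2 ≤ e x ^ 2 := pow_le_pow_left₀ (hepos y).le (heanti hxy.le) 2
      have h3 := mul_lt_mul_of_pos_left h1 hμ
      simp only [Φ]
      nlinarith
    have hΦ0 : Φ p₀ = 0 := by
      have h1 := hFm Set.self_mem_Ici (show p₀ ∈ Set.Ici θ₀ from hp.le) hp
      have h2 : 0 ≤ 2 * μ₀ * (Fo f p₀ - Fo f θ₀) :=
        mul_nonneg (by linarith) (by linarith)
      simp only [Φ]
      rw [hpe, Real.sq_sqrt h2]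
      ring
    have hu1 : Tendsto (fun ε : ℝ => u ε 1) (nhdsWithin (0:ℝ) (Set.Ioi 0)) (nhds p₀) := by
      rw [tendsto_order]
      constructor
      · intro q hq
        rcases lt_or_ge q θ₀ with hqθ | hqθ
        · filter_upwards [hpos] with ε hε
          exact hqθ.trans_le (hge ε hε 1 ⟨zero_le_one, le_rfl⟩).1
        · have hlt : Φ q < 0 := hΦ0 ▸ hΦm hqθ hp.le hq
          filter_upwards [hpos, hΦlim.eventually (lt_mem_nhds hlt)] with ε hε h1
          exact (hΦm.lt_iff_lt hqθ (hge ε hε 1 ⟨zero_le_one, le_rfl⟩).1).1 h1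
      · intro q hq
        have hqθ : θ₀ ≤ q := (hp.trans hq).le
        have hlt : 0 < Φ q := hΦ0 ▸ hΦm (show p₀ ∈ Set.Ici θ₀ from hp.le) hqθ hq
        filter_upwards [hpos, hΦlim.eventually (gt_mem_nhds hlt)] with ε hε h1
        exact (hΦm.lt_iff_lt (hge ε hε 1 ⟨zero_le_one, le_rfl⟩).1 hqθ).1 h1
    refine ⟨hu1, ((hec.tendsto p₀).comp hu1).congr' ?_⟩
    filter_upwards [hpos] with ε hε
    exact ((hu ε hε).2.2.2.2.2.2.1).symm
end
end

section
/- Assume lim_{ε↓0} β_ε(1)/α_ε(1) = μ₀ for some constant μ₀ > 0. Then lim_{ε↓0} [ ε ∫_{k*}^{1} ((N−1)/s + α_ε'(s)/α_ε(s)) (u_ε'(s))² ds − √μ₀ ( (N−1) + α_ε'(1)/α_ε(1) ) ∫_{θ₀}^{p₀} √(2 (F(t) − F(θ₀))) dt ] = 0. -/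
open Filter Set MeasureTheory

noncomputable section

/-- Data for a single `ε` on the interval `[k,1]`, with uniform constants. -/
structure Dat (k θ₀ K c e0 : ℝ) (f G : ℝ → ℝ) (ε : ℝ) (u u' g m dm : ℝ → ℝ) : Prop where
  hε : 0 < ε
  hεk : ε ≤ 1 - k
  cu : ContinuousOn u (Icc k 1)
  du : ∀ s ∈ Ioo k 1, HasDerivAt u (u' s) s
  cu' : ContinuousOn u' (Icc k 1)
  du' : ∀ s ∈ Ioo k 1, HasDerivAt u' (m s * f (u s) / ε ^ 2 - g s * u' s) s
  cg : ContinuousOn g (Icc k 1)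
  cm : ContinuousOn m (Icc k 1)
  cdm : ContinuousOn dm (Icc k 1)
  hdm : ∀ s ∈ Ioo k 1, HasDerivAt m (dm s) s
  bg : ∀ s ∈ Icc k 1, |g s| ≤ K
  bm : ∀ s ∈ Icc k 1, c ≤ m s ∧ m s ≤ K
  bdm : ∀ s ∈ Icc k 1, |dm s| ≤ K
  lg : ∀ s ∈ Icc k 1, |g s - g 1| ≤ K * (1 - s)
  lm : ∀ s ∈ Icc k 1, |m s - m 1| ≤ K * (1 - s)
  hu : ∀ s ∈ Icc k 1, θ₀ ≤ u s ∧ 0 ≤ u' s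
  he : ε * u' 1 ≤ e0

/-- Assumptions on the nonlinearity. -/
structure FDat (θ₀ c : ℝ) (f G : ℝ → ℝ) : Prop where
  cf : Continuous f
  mf : Monotone f
  f0 : f θ₀ = 0
  lf : ∀ t, θ₀ ≤ t → c * (t - θ₀) ≤ f t
  dG : ∀ t, HasDerivAt G (f t) t
  G0 : G θ₀ = 0

lemma FDat.cG {θ₀ c : ℝ} {f G : ℝ → ℝ} (h : FDat θ₀ c f G) : Continuous G :=
  continuous_iff_continuousAt.2 fun t => (h.dG t).continuousAt

lemma FDat.fnn {θ₀ c : ℝ} {f G : ℝ → ℝ} (h : FDat θ₀ c f G) {t : ℝ} (ht : θ₀ ≤ t) : 0 ≤ f t := by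
  have := h.mf ht
  rwa [h.f0] at this

lemma FDat.bG {θ₀ c : ℝ} {f G : ℝ → ℝ} (h : FDat θ₀ c f G) {t : ℝ} (ht : θ₀ ≤ t) :
    0 ≤ G t ∧ G t ≤ f t * (t - θ₀) := by
  rcases ht.eq_or_lt with rfl | hlt
  · simp [h.G0]
  · obtain ⟨ξ, hξ, he⟩ := exists_hasDerivAt_eq_slope G f hlt h.cG.continuousOn
      (fun x _ => h.dG x)
    rw [h.G0, sub_zero, eq_div_iff (by linarith)] at he
    have h1 := h.fnn hξ.1.le
    have h2 := h.mf hξ.2.le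
    constructor
    · rw [← he]; exact mul_nonneg h1 (by linarith)
    · rw [← he]; exact mul_le_mul_of_nonneg_right h2 (by linarith)

section
variable {k θ₀ K c e0 : ℝ} {f G : ℝ → ℝ} {ε : ℝ} {u u' g m dm : ℝ → ℝ}

lemma Dat.vbound (hk0 : 0 < k) (hc : 0 < c) (hF : FDat θ₀ c f G)
    (h : Dat k θ₀ K c e0 f G ε u u' g m dm) :
    ∀ s ∈ Icc k 1, ε * u' s ≤ Real.exp K * e0 := by
  have hk1 : k < 1 := by linarith [h.hε, h.hεk]
  have hK : 0 ≤ K := (abs_nonneg _).trans (h.bg 1 ⟨hk1.le, le_rfl⟩)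
  have hmono : MonotoneOn (fun s => Real.exp (K * s) * u' s) (Icc k 1) := by
    apply monotoneOn_of_deriv_nonneg (convex_Icc k 1)
    · exact (by fun_prop : Continuous fun s => Real.exp (K * s)).continuousOn.mul h.cu'
    · rw [interior_Icc]
      intro s hs
      exact ((by fun_prop : DifferentiableAt ℝ (fun s => Real.exp (K * s)) s).mul
        (h.du' s hs).differentiableAt).differentiableWithinAt
    · rw [interior_Icc]
      intro s hs
      have hs' : s ∈ Icc k 1 := ⟨hs.1.le, hs.2.le⟩
      have h1 : HasDerivAt (fun s => Real.exp (K * s)) (Real.exp (K * s) * K) s := by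
        simpa using ((hasDerivAt_id s).const_mul K).exp
      have h2 := h1.mul (h.du' s hs)
      have h3 : deriv (fun s => Real.exp (K * s) * u' s) s = _ := h2.deriv
      rw [h3]
      have h4 : 0 ≤ m s * f (u s) / ε ^ 2 :=
        div_nonneg (mul_nonneg (hc.le.trans (h.bm s hs').1) (hF.fnn (h.hu s hs').1)) (sq_nonneg _)
      have h5 : g s * u' s ≤ K * u' s :=
        mul_le_mul_of_nonneg_right ((le_abs_self _).trans (h.bg s hs')) (h.hu s hs').2
      have h6 := Real.exp_pos (K * s)
      have h7 : 0 ≤ Real.exp (K * s) * (K * u' s + (m s * f (u s) / ε ^ 2 - g s * u' s)) :=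
        mul_nonneg h6.le (by linarith)
      nlinarith [h7]
  intro s hs
  have h1 := hmono hs (⟨hk1.le, le_rfl⟩ : (1:ℝ) ∈ Icc k 1) hs.2
  simp only [mul_one] at h1
  have h2 : 1 ≤ Real.exp (K * s) := Real.one_le_exp (mul_nonneg hK (hk0.le.trans hs.1))
  have h3 := (h.hu s hs).2
  have h4 : u' s ≤ Real.exp K * u' 1 := by nlinarith
  calc ε * u' s ≤ ε * (Real.exp K * u' 1) := mul_le_mul_of_nonneg_left h4 h.hε.le
    _ = Real.exp K * (ε * u' 1) := by ring
    _ ≤ _ := mul_le_mul_of_nonneg_left h.he (Real.exp_pos K).le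

lemma Dat.umono (h : Dat k θ₀ K c e0 f G ε u u' g m dm) : MonotoneOn u (Icc k 1) := by
  apply monotoneOn_of_deriv_nonneg (convex_Icc k 1) h.cu
  · rw [interior_Icc]
    exact fun s hs => (h.du s hs).differentiableAt.differentiableWithinAt
  · rw [interior_Icc]
    intro s hs
    rw [(h.du s hs).deriv]
    exact (h.hu s ⟨hs.1.le, hs.2.le⟩).2

lemma ii {φ : ℝ → ℝ} {x y p q : ℝ} (h : ContinuousOn φ (Icc p q)) (hx : p ≤ x) (hxy : x ≤ y)
    (hy : y ≤ q) : IntervalIntegrable φ volume x y :=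
  (h.mono (Icc_subset_Icc hx hy)).intervalIntegrable_of_Icc hxy

/-- Integral bound for `f(u)`. -/
lemma Dat.fint (hk0 : 0 < k) (hc : 0 < c) (hF : FDat θ₀ c f G)
    (h : Dat k θ₀ K c e0 f G ε u u' g m dm) :
    ∫ s in k..1, f (u s) ≤ (e0 + K * (Real.exp K * e0)) / c * ε := by
  have hk1 : k < 1 := by linarith [h.hε, h.hεk]
  have hε := h.hε
  have hK : 0 ≤ K := (abs_nonneg _).trans (h.bg 1 ⟨hk1.le, le_rfl⟩)
  have hcf : ContinuousOn (fun s => f (u s)) (Icc k 1) := hF.cf.comp_continuousOn h.cu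
  have hcont : ContinuousOn (fun s => m s * f (u s) / ε ^ 2 - g s * u' s) (Icc k 1) :=
    ((h.cm.fun_mul hcf).div_const _).sub (h.cg.fun_mul h.cu')
  have h1 := intervalIntegral.integral_eq_sub_of_hasDerivAt_of_le hk1.le h.cu' h.du'
    (ii hcont le_rfl hk1.le le_rfl)
  set D := Real.exp K * e0 with hD
  have hv := h.vbound hk0 hc hF
  have h2 : ∫ s in k..1, (c / ε ^ 2 * f (u s) - K * D / ε) ≤
      ∫ s in k..1, (m s * f (u s) / ε ^ 2 - g s * u' s) := by
    apply intervalIntegral.integral_mono_on hk1.le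
      (ii ((continuousOn_const.fun_mul hcf).fun_sub continuousOn_const) le_rfl hk1.le le_rfl)
      (ii hcont le_rfl hk1.le le_rfl)
    intro s hs
    have a1 := hv s hs
    have a2 : g s * u' s ≤ K * u' s :=
      mul_le_mul_of_nonneg_right ((le_abs_self _).trans (h.bg s hs)) (h.hu s hs).2
    have a3 : K * u' s ≤ K * D / ε := by
      rw [le_div_iff₀ hε]
      calc K * u' s * ε = K * (ε * u' s) := by ring
        _ ≤ K * D := mul_le_mul_of_nonneg_left a1 hK
    have a4 : c / ε ^ 2 * f (u s) ≤ m s * f (u s) / ε ^ 2 := by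
      rw [div_mul_eq_mul_div]
      exact div_le_div_of_nonneg_right
        (mul_le_mul_of_nonneg_right (h.bm s hs).1 (hF.fnn (h.hu s hs).1)) (sq_nonneg _)
    linarith
  rw [h1, intervalIntegral.integral_sub
    (ii (continuousOn_const.fun_mul hcf) le_rfl hk1.le le_rfl) (by simp),
    intervalIntegral.integral_const_mul, intervalIntegral.integral_const, smul_eq_mul] at h2
  have h3 := (h.hu k ⟨le_rfl, hk1.le⟩).2
  have h4 : u' 1 ≤ e0 / ε := by rw [le_div_iff₀ hε]; linarith [h.he]
  have hD0 : 0 ≤ D := (mul_nonneg hε.le (h.hu 1 ⟨hk1.le, le_rfl⟩).2).trans (hv 1 ⟨hk1.le, le_rfl⟩)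
  have h5 : (1 - k) * (K * D / ε) ≤ K * D / ε := by
    have : 0 ≤ K * D / ε := by positivity
    nlinarith
  have h6 : c / ε ^ 2 * (∫ s in k..1, f (u s)) ≤ (e0 + K * D) / ε := by
    rw [add_div]; linarith
  have h7 : (∫ s in k..1, f (u s)) = ε ^ 2 / c * (c / ε ^ 2 * (∫ s in k..1, f (u s))) := by
    field_simp
  rw [h7]
  calc _ ≤ ε ^ 2 / c * ((e0 + K * D) / ε) := mul_le_mul_of_nonneg_left h6 (by positivity)
    _ = _ := by field_simp

lemma Dat.wint (hk0 : 0 < k) (hc : 0 < c) (hF : FDat θ₀ c f G)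
    (h : Dat k θ₀ K c e0 f G ε u u' g m dm) :
    ∫ s in k..1, (u s - θ₀) ≤ (e0 + K * (Real.exp K * e0)) / c / c * ε := by
  have hk1 : k < 1 := by linarith [h.hε, h.hεk]
  have h0 := h.fint hk0 hc hF
  have hcf : ContinuousOn (fun s => f (u s)) (Icc k 1) := hF.cf.comp_continuousOn h.cu
  have h2 : ∫ s in k..1, c * (u s - θ₀) ≤ ∫ s in k..1, f (u s) := by
    apply intervalIntegral.integral_mono_on hk1.le
      (ii (continuousOn_const.fun_mul (h.cu.sub continuousOn_const)) le_rfl hk1.le le_rfl)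
      (ii hcf le_rfl hk1.le le_rfl)
    intro s hs
    exact hF.lf _ (h.hu s hs).1
  rw [intervalIntegral.integral_const_mul] at h2
  rw [div_mul_eq_mul_div, le_div_iff₀ hc]
  linarith

lemma Dat.wpt (hk0 : 0 < k) (hc : 0 < c) (hF : FDat θ₀ c f G)
    (h : Dat k θ₀ K c e0 f G ε u u' g m dm) :
    ∀ s ∈ Icc k 1, (1 - s) * (u s - θ₀) ≤ (e0 + K * (Real.exp K * e0)) / c / c * ε := by
  have hk1 : k < 1 := by linarith [h.hε, h.hεk]
  intro s hs
  refine le_trans ?_ (h.wint hk0 hc hF)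
  have hcw : ContinuousOn (fun s => u s - θ₀) (Icc k 1) := h.cu.sub continuousOn_const
  have h1 : ∫ x in s..1, (u s - θ₀) ≤ ∫ x in s..1, (u x - θ₀) := by
    apply intervalIntegral.integral_mono_on hs.2 (by simp) (ii hcw hs.1 hs.2 le_rfl)
    intro x hx
    have := h.umono hs ⟨hs.1.trans hx.1, hx.2⟩ hx.1
    linarith
  rw [intervalIntegral.integral_const, smul_eq_mul] at h1
  have h2 : 0 ≤ ∫ x in k..s, (u x - θ₀) := by
    apply intervalIntegral.integral_nonneg hs.1
    intro x hx
    linarith [(h.hu x ⟨hx.1, hx.2.trans hs.2⟩).1]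
  have h3 := intervalIntegral.integral_add_adjacent_intervals (ii hcw le_rfl hs.1 hs.2)
    (ii hcw hs.1 hs.2 le_rfl)
  linarith

lemma Dat.wbd (hk0 : 0 < k) (hc : 0 < c) (hF : FDat θ₀ c f G)
    (h : Dat k θ₀ K c e0 f G ε u u' g m dm) :
    ∀ s ∈ Icc k 1, u s - θ₀ ≤
      (e0 + K * (Real.exp K * e0)) / c / c + Real.exp K * e0 := by
  have hk1 : k < 1 := by linarith [h.hε, h.hεk]
  have hε := h.hε
  have hmem : 1 - ε ∈ Icc k 1 := ⟨by linarith [h.hεk], by linarith⟩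
  have h1 := h.wpt hk0 hc hF (1 - ε) hmem
  have h1' : u (1 - ε) - θ₀ ≤ (e0 + K * (Real.exp K * e0)) / c / c := by
    have : (u (1 - ε) - θ₀) * ε ≤ (e0 + K * (Real.exp K * e0)) / c / c * ε := by linarith
    exact le_of_mul_le_mul_right this hε
  have hlt : 1 - ε < 1 := by linarith
  obtain ⟨ξ, hξ, hs⟩ := exists_hasDerivAt_eq_slope u u' hlt
    (h.cu.mono (Icc_subset_Icc hmem.1 le_rfl))
    (fun x hx => h.du x ⟨lt_of_le_of_lt hmem.1 hx.1, hx.2⟩)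
  rw [eq_div_iff (by linarith)] at hs
  have h2 := h.vbound hk0 hc hF ξ ⟨hmem.1.trans hξ.1.le, hξ.2.le⟩
  intro s hs'
  have h3 := h.umono hs' (⟨hk1.le, le_rfl⟩ : (1:ℝ) ∈ Icc k 1) hs'.2
  linarith

lemma Dat.uint (h : Dat k θ₀ K c e0 f G ε u u' g m dm) :
    ∫ s in k..1, u' s = u 1 - u k := by
  have hk1 : k < 1 := by linarith [h.hε, h.hεk]
  exact intervalIntegral.integral_eq_sub_of_hasDerivAt_of_le hk1.le h.cu h.du
    (ii h.cu' le_rfl hk1.le le_rfl)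

/-- The energy density has integral `O(ε)`. -/
lemma Dat.hint (hk0 : 0 < k) (hc : 0 < c) (hF : FDat θ₀ c f G)
    (h : Dat k θ₀ K c e0 f G ε u u' g m dm) :
    ∫ s in k..1, ((ε * u' s) ^ 2 + G (u s)) ≤
      (Real.exp K * e0 + (e0 + K * (Real.exp K * e0)) / c) *
      ((e0 + K * (Real.exp K * e0)) / c / c + Real.exp K * e0) * ε := by
  have hk1 : k < 1 := by linarith [h.hε, h.hεk]
  have hε := h.hε
  have h1 := h.fint hk0 hc hF
  have h2 := h.wbd hk0 hc hF
  have h3 := h.vbound hk0 hc hF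
  have h4 := h.uint
  set D := Real.exp K * e0 with hD
  set C2 := (e0 + K * D) / c with hC2
  set C4 := C2 / c + D with hC4
  have hcf : ContinuousOn (fun s => f (u s)) (Icc k 1) := hF.cf.comp_continuousOn h.cu
  have hcG : ContinuousOn (fun s => G (u s)) (Icc k 1) := hF.cG.comp_continuousOn h.cu
  have h1m : (1:ℝ) ∈ Icc k 1 := ⟨hk1.le, le_rfl⟩
  have hD0 : 0 ≤ D := (mul_nonneg hε.le (h.hu 1 h1m).2).trans (h3 1 h1m)
  have hC40 : 0 ≤ C4 := by linarith [h2 1 h1m, (h.hu 1 h1m).1]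
  have h5 : ∫ s in k..1, ((ε * u' s) ^ 2 + G (u s)) ≤
      ∫ s in k..1, (D * ε * u' s + C4 * f (u s)) := by
    apply intervalIntegral.integral_mono_on hk1.le
      (ii (((continuousOn_const.fun_mul h.cu').fun_pow 2).fun_add hcG) le_rfl hk1.le le_rfl)
      (ii ((continuousOn_const.fun_mul h.cu').fun_add (continuousOn_const.fun_mul hcf)) le_rfl hk1.le le_rfl)
    intro s hs
    have a1 := h3 s hs
    have a2 : 0 ≤ ε * u' s := mul_nonneg hε.le (h.hu s hs).2
    have a3 := (hF.bG (h.hu s hs).1).2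
    have a4 := h2 s hs
    have a5 := hF.fnn (h.hu s hs).1
    have a6 : f (u s) * (u s - θ₀) ≤ C4 * f (u s) := by nlinarith
    have a7 : (ε * u' s) ^ 2 ≤ D * ε * u' s := by nlinarith
    linarith
  rw [intervalIntegral.integral_add (ii (continuousOn_const.fun_mul h.cu') le_rfl hk1.le le_rfl)
    (ii (continuousOn_const.fun_mul hcf) le_rfl hk1.le le_rfl),
    intervalIntegral.integral_const_mul, intervalIntegral.integral_const_mul, h4] at h5
  have h6 : u 1 - u k ≤ C4 := by linarith [h2 1 h1m, (h.hu k ⟨le_rfl, hk1.le⟩).1]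
  have h7 : D * ε * (u 1 - u k) ≤ D * ε * C4 := mul_le_mul_of_nonneg_left h6 (by positivity)
  have h8 : C4 * (∫ s in k..1, f (u s)) ≤ C4 * (C2 * ε) := mul_le_mul_of_nonneg_left h1 hC40
  calc _ ≤ _ := h5
    _ ≤ D * ε * C4 + C4 * (C2 * ε) := add_le_add h7 h8
    _ = _ := by ring

/-- Uniform energy estimate. -/
lemma Dat.energy (hk0 : 0 < k) (hc : 0 < c) (hF : FDat θ₀ c f G)
    (h : Dat k θ₀ K c e0 f G ε u u' g m dm) {C : ℝ}
    (hC : ∫ s in k..1, ((ε * u' s) ^ 2 + G (u s)) ≤ C * ε) :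
    ∀ s ∈ Icc k 1, |(ε * u' s) ^ 2 / 2 - m s * G (u s)| ≤
      ((1 + K) * C / (1 - k) + K * C) * ε := by
  have hk1 : k < 1 := by linarith [h.hε, h.hεk]
  have hε := h.hε
  have h1m : (1:ℝ) ∈ Icc k 1 := ⟨hk1.le, le_rfl⟩
  have hK : 0 ≤ K := (abs_nonneg _).trans (h.bg 1 h1m)
  have hcG : ContinuousOn (fun s => G (u s)) (Icc k 1) := hF.cG.comp_continuousOn h.cu
  set H : ℝ → ℝ := fun s => (ε * u' s) ^ 2 + G (u s) with hH
  set E : ℝ → ℝ := fun s => (ε * u' s) ^ 2 / 2 - m s * G (u s) with hE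
  have cH : ContinuousOn H (Icc k 1) := ((continuousOn_const.fun_mul h.cu').fun_pow 2).fun_add hcG
  have cE : ContinuousOn E (Icc k 1) :=
    (((continuousOn_const.fun_mul h.cu').fun_pow 2).div_const 2).sub (h.cm.fun_mul hcG)
  have Hnn : ∀ s ∈ Icc k 1, 0 ≤ H s := fun s hs =>
    add_nonneg (sq_nonneg _) (hF.bG (h.hu s hs).1).1
  set E' : ℝ → ℝ := fun s => -(g s * (ε * u' s) ^ 2) - dm s * G (u s) with hE'
  have cE' : ContinuousOn E' (Icc k 1) :=
    ((h.cg.fun_mul ((continuousOn_const.fun_mul h.cu').fun_pow 2)).neg).sub (h.cdm.fun_mul hcG)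
  have dE : ∀ s ∈ Ioo k 1, HasDerivAt E (E' s) s := by
    intro s hs
    have a1 := ((h.du' s hs).const_mul ε).pow 2 |>.div_const 2
    have a2 := (h.hdm s hs).mul ((hF.dG (u s)).comp s (h.du s hs))
    have a3 := a1.sub a2
    refine a3.congr_deriv ?_
    simp only [hE', Function.comp]
    field_simp
    push_cast
    ring
  have bE' : ∀ s ∈ Icc k 1, |E' s| ≤ K * H s := by
    intro s hs
    have a1 := (hF.bG (h.hu s hs).1).1
    have a2 : |g s * (ε * u' s) ^ 2| ≤ K * (ε * u' s) ^ 2 := by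
      rw [abs_mul, abs_of_nonneg (sq_nonneg (ε * u' s))]
      exact mul_le_mul_of_nonneg_right (h.bg s hs) (sq_nonneg _)
    have a3 : |dm s * G (u s)| ≤ K * G (u s) := by
      rw [abs_mul, abs_of_nonneg a1]
      exact mul_le_mul_of_nonneg_right (h.bdm s hs) a1
    rw [abs_le] at a2 a3 ⊢
    simp only [hE', hH]
    constructor <;> linarith [a2.1, a2.2, a3.1, a3.2]
  have key : ∀ s ∈ Icc k 1, ∀ t ∈ Icc k 1, s ≤ t → |E t - E s| ≤ K * C * ε := by
    intro s hs t ht hst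
    have a1 := intervalIntegral.integral_eq_sub_of_hasDerivAt_of_le hst
      (cE.mono (Icc_subset_Icc hs.1 ht.2))
      (fun x hx => dE x ⟨lt_of_le_of_lt hs.1 hx.1, lt_of_lt_of_le hx.2 ht.2⟩)
      (ii cE' hs.1 hst ht.2)
    rw [← a1]
    calc |∫ x in s..t, E' x| ≤ ∫ x in s..t, |E' x| :=
          intervalIntegral.abs_integral_le_integral_abs hst
      _ ≤ ∫ x in s..t, K * H x := by
          apply intervalIntegral.integral_mono_on hst (ii cE'.abs hs.1 hst ht.2)
            (ii (continuousOn_const.fun_mul cH) hs.1 hst ht.2)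
          intro x hx
          exact bE' x ⟨hs.1.trans hx.1, hx.2.trans ht.2⟩
      _ = K * ∫ x in s..t, H x := intervalIntegral.integral_const_mul _ _
      _ ≤ K * (C * ε) := by
          apply mul_le_mul_of_nonneg_left _ hK
          refine le_trans ?_ hC
          have b1 := intervalIntegral.integral_add_adjacent_intervals
            (ii cH le_rfl hs.1 hs.2) (ii cH hs.1 hst ht.2)
          have b2 := intervalIntegral.integral_add_adjacent_intervals
            (ii cH le_rfl ht.1 ht.2) (ii cH ht.1 ht.2 le_rfl)
          have b3 : 0 ≤ ∫ x in k..s, H x := intervalIntegral.integral_nonneg hs.1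
            fun x hx => Hnn x ⟨hx.1, hx.2.trans hs.2⟩
          have b4 : 0 ≤ ∫ x in t..1, H x := intervalIntegral.integral_nonneg ht.2
            fun x hx => Hnn x ⟨ht.1.trans hx.1, hx.2⟩
          linarith
      _ = _ := by ring
  have key2 : ∀ s ∈ Icc k 1, ∀ t ∈ Icc k 1, |E s| ≤ (1 + K) * H t + K * C * ε := by
    intro s hs t ht
    have a1 : |E t - E s| ≤ K * C * ε := by
      rcases le_total s t with hst | hst
      · exact key s hs t ht hst
      · rw [abs_sub_comm]; exact key t ht s hs hst
    have a2 : |E t| ≤ (1 + K) * H t := by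
      have b1 := (hF.bG (h.hu t ht).1).1
      have b2 := sq_nonneg (ε * u' t)
      have b3 := h.bm t ht
      have b4 : m t * G (u t) ≤ K * G (u t) := mul_le_mul_of_nonneg_right b3.2 b1
      have b5 : 0 ≤ m t * G (u t) := mul_nonneg (hc.le.trans b3.1) b1
      have b6 : 0 ≤ K * (ε * u' t) ^ 2 := mul_nonneg hK b2
      simp only [hE, hH]
      rw [abs_le]
      constructor <;> nlinarith
    have a3 : |E s| ≤ |E t| + |E t - E s| := by
      have := abs_sub_abs_le_abs_sub (E s) (E t)
      rw [abs_sub_comm (E s)] at this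
      linarith
    linarith
  intro s hs
  change |E s| ≤ _
  have a1 : ∫ t in k..1, |E s| ≤ ∫ t in k..1, ((1 + K) * H t + K * C * ε) := by
    apply intervalIntegral.integral_mono_on hk1.le (by simp)
      (ii ((continuousOn_const.fun_mul cH).fun_add continuousOn_const) le_rfl hk1.le le_rfl)
    exact fun t ht => key2 s hs t ht
  rw [intervalIntegral.integral_add (ii (continuousOn_const.fun_mul cH) le_rfl hk1.le le_rfl) (by simp),
    intervalIntegral.integral_const_mul, intervalIntegral.integral_const,
    intervalIntegral.integral_const, smul_eq_mul, smul_eq_mul] at a1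
  have hk' : 0 < 1 - k := by linarith
  have a2 : (1 + K) * (∫ t in k..1, H t) ≤ (1 + K) * (C * ε) :=
    mul_le_mul_of_nonneg_left hC (by linarith)
  have a3 : (1 - k) * |E s| ≤ (1 - k) * (((1 + K) * C / (1 - k) + K * C) * ε) := by
    have : (1 - k) * (((1 + K) * C / (1 - k) + K * C) * ε) =
      (1 + K) * (C * ε) + (1 - k) * (K * C * ε) := by field_simp
    linarith
  exact le_of_mul_le_mul_left a3 (by linarith)

/-- Replace `g` by `g 1`. -/
lemma Dat.gint (hk0 : 0 < k) (hc : 0 < c) (hF : FDat θ₀ c f G)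
    (h : Dat k θ₀ K c e0 f G ε u u' g m dm) :
    |ε * (∫ s in k..1, g s * (u' s) ^ 2) - g 1 * (ε * ∫ s in k..1, (u' s) ^ 2)| ≤
      K * (Real.exp K * e0) * ((e0 + K * (Real.exp K * e0)) / c / c) * ε := by
  have hk1 : k < 1 := by linarith [h.hε, h.hεk]
  have hε := h.hε
  have h1m : (1:ℝ) ∈ Icc k 1 := ⟨hk1.le, le_rfl⟩
  have hK : 0 ≤ K := (abs_nonneg _).trans (h.bg 1 h1m)
  have h1 := h.wint hk0 hc hF
  have h3 := h.vbound hk0 hc hF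
  set D := Real.exp K * e0 with hD
  set C3 := (e0 + K * D) / c / c with hC3
  have hD0 : 0 ≤ D := (mul_nonneg hε.le (h.hu 1 h1m).2).trans (h3 1 h1m)
  have c2 : ContinuousOn (fun s => u' s ^ 2) (Icc k 1) := h.cu'.fun_pow 2
  have cw : ContinuousOn (fun s => u s - θ₀) (Icc k 1) := h.cu.sub continuousOn_const
  have c1s : ContinuousOn (fun s : ℝ => 1 - s) (Icc k 1) := by fun_prop
  have e1 : ε * (∫ s in k..1, g s * (u' s) ^ 2) - g 1 * (ε * ∫ s in k..1, (u' s) ^ 2) =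
      ∫ s in k..1, ε * ((g s - g 1) * (u' s) ^ 2) := by
    rw [intervalIntegral.integral_const_mul]
    simp only [sub_mul]
    rw [intervalIntegral.integral_sub (ii (h.cg.fun_mul c2) le_rfl hk1.le le_rfl)
      (ii (continuousOn_const.fun_mul c2) le_rfl hk1.le le_rfl), intervalIntegral.integral_const_mul]
    ring
  rw [e1]
  have p1 : ∫ s in k..1, ((1 - s) * u' s - (u s - θ₀)) = _ :=
    intervalIntegral.integral_eq_sub_of_hasDerivAt_of_le
    (f := fun s => (1 - s) * (u s - θ₀)) hk1.le (c1s.fun_mul cw)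
    (fun s hs => by
      have := ((hasDerivAt_id s).const_sub 1).mul ((h.du s hs).sub_const θ₀)
      refine this.congr_deriv ?_
      simp; ring)
    (ii ((c1s.fun_mul h.cu').fun_sub cw) le_rfl hk1.le le_rfl)
  rw [intervalIntegral.integral_sub (ii (c1s.fun_mul h.cu') le_rfl hk1.le le_rfl)
    (ii cw le_rfl hk1.le le_rfl)] at p1
  have p2 : 0 ≤ (1 - k) * (u k - θ₀) :=
    mul_nonneg (by linarith) (by linarith [(h.hu k ⟨le_rfl, hk1.le⟩).1])
  have p3 : ∫ s in k..1, (1 - s) * u' s ≤ C3 * ε := by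
    simp only [sub_self, zero_mul, zero_sub] at p1
    linarith
  calc |∫ s in k..1, ε * ((g s - g 1) * (u' s) ^ 2)|
      ≤ ∫ s in k..1, |ε * ((g s - g 1) * (u' s) ^ 2)| :=
        intervalIntegral.abs_integral_le_integral_abs hk1.le
    _ ≤ ∫ s in k..1, K * D * ((1 - s) * u' s) := by
        apply intervalIntegral.integral_mono_on hk1.le
          (ii (continuousOn_const.fun_mul ((h.cg.fun_sub continuousOn_const).fun_mul c2)).abs
            le_rfl hk1.le le_rfl)
          (ii (continuousOn_const.fun_mul (c1s.fun_mul h.cu')) le_rfl hk1.le le_rfl)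
        intro s hs
        have b1 := h.lg s hs
        have b2 := (h.hu s hs).2
        have b3 := h3 s hs
        rw [abs_mul, abs_mul, abs_of_pos hε, abs_of_nonneg (sq_nonneg (u' s))]
        have b4 : 0 ≤ 1 - s := by linarith [hs.2]
        calc ε * (|g s - g 1| * u' s ^ 2) = |g s - g 1| * ((ε * u' s) * u' s) := by ring
          _ ≤ (K * (1 - s)) * (D * u' s) := by
            apply mul_le_mul b1 (mul_le_mul_of_nonneg_right b3 b2)
              (mul_nonneg (mul_nonneg hε.le b2) b2) (mul_nonneg hK b4)
          _ = _ := by ring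
    _ = K * D * ∫ s in k..1, (1 - s) * u' s := intervalIntegral.integral_const_mul _ _
    _ ≤ K * D * (C3 * ε) := mul_le_mul_of_nonneg_left p3 (by positivity)
    _ = _ := by ring

lemma sub_sq_le_abs {x y η : ℝ} (hx : 0 ≤ x) (hy : 0 ≤ y) (h : |x ^ 2 - y ^ 2| ≤ η) :
    |x - y| ≤ Real.sqrt η := by
  apply Real.le_sqrt_of_sq_le
  rw [sq_abs]
  refine le_trans ?_ h
  rcases le_total x y with hxy | hxy
  · rw [abs_sub_comm]
    exact le_trans (by nlinarith) (le_abs_self _)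
  · exact le_trans (by nlinarith) (le_abs_self _)

/-- Asymptotics of the Dirichlet integral. -/
lemma Dat.vint (hF : FDat θ₀ c f G)
    (h : Dat k θ₀ K c e0 f G ε u u' g m dm) {μ₀ η C4 : ℝ} (hμ : 0 < μ₀)
    (hη : ∀ s ∈ Icc k 1, |(ε * u' s) ^ 2 - 2 * μ₀ * G (u s)| ≤ η)
    (h4 : ∀ s ∈ Icc k 1, u s - θ₀ ≤ C4) :
    |ε * (∫ s in k..1, (u' s) ^ 2) - Real.sqrt μ₀ *
      ((∫ t in θ₀..u 1, Real.sqrt (2 * G t)) - ∫ t in θ₀..u k, Real.sqrt (2 * G t))| ≤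
      Real.sqrt η * C4 := by
  have hk1 : k < 1 := by linarith [h.hε, h.hεk]
  have hε := h.hε
  have h1m : (1:ℝ) ∈ Icc k 1 := ⟨hk1.le, le_rfl⟩
  have cS : Continuous fun t => Real.sqrt (2 * G t) := (continuous_const.mul hF.cG).sqrt
  have dΦ : ∀ t, HasDerivAt (fun x => ∫ t in θ₀..x, Real.sqrt (2 * G t)) (Real.sqrt (2 * G t)) t :=
    fun t => cS.integral_hasStrictDerivAt θ₀ t |>.hasDerivAt
  have cΦ : Continuous (fun x => ∫ t in θ₀..x, Real.sqrt (2 * G t)) :=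
    continuous_iff_continuousAt.2 fun t => (dΦ t).continuousAt
  have cSu : ContinuousOn (fun s => Real.sqrt (2 * G (u s))) (Icc k 1) :=
    cS.comp_continuousOn h.cu
  have e1 : ∫ s in k..1, Real.sqrt (2 * G (u s)) * u' s = _ :=
    intervalIntegral.integral_eq_sub_of_hasDerivAt_of_le
    (f := fun s => ∫ t in θ₀..u s, Real.sqrt (2 * G t)) hk1.le (cΦ.comp_continuousOn h.cu)
    (fun s hs => (dΦ (u s)).comp s (h.du s hs))
    (ii (cSu.fun_mul h.cu') le_rfl hk1.le le_rfl)
  rw [← e1, ← intervalIntegral.integral_const_mul, ← intervalIntegral.integral_const_mul,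
    ← intervalIntegral.integral_sub (ii (continuousOn_const.fun_mul (h.cu'.fun_pow 2)) le_rfl hk1.le le_rfl)
    (ii (continuousOn_const.fun_mul (cSu.fun_mul h.cu')) le_rfl hk1.le le_rfl)]
  calc _ ≤ ∫ s in k..1, |ε * u' s ^ 2 - Real.sqrt μ₀ * (Real.sqrt (2 * G (u s)) * u' s)| :=
        intervalIntegral.abs_integral_le_integral_abs hk1.le
    _ ≤ ∫ s in k..1, Real.sqrt η * u' s := by
        apply intervalIntegral.integral_mono_on hk1.le
          (ii ((continuousOn_const.fun_mul (h.cu'.fun_pow 2)).fun_sub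
            (continuousOn_const.fun_mul (cSu.fun_mul h.cu'))).abs le_rfl hk1.le le_rfl)
          (ii (continuousOn_const.fun_mul h.cu') le_rfl hk1.le le_rfl)
        intro s hs
        have b2 := (h.hu s hs).2
        have b3 := (hF.bG (h.hu s hs).1).1
        have : ε * u' s ^ 2 - Real.sqrt μ₀ * (Real.sqrt (2 * G (u s)) * u' s) =
          (ε * u' s - Real.sqrt μ₀ * Real.sqrt (2 * G (u s))) * u' s := by ring
        rw [this, abs_mul, abs_of_nonneg b2]
        apply mul_le_mul_of_nonneg_right _ b2
        apply sub_sq_le_abs (mul_nonneg hε.le b2) (by positivity)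
        rw [mul_pow (Real.sqrt μ₀), Real.sq_sqrt hμ.le, Real.sq_sqrt (by linarith)]
        have := hη s hs
        rwa [show μ₀ * (2 * G (u s)) = 2 * μ₀ * G (u s) by ring]
    _ = Real.sqrt η * (u 1 - u k) := by
        rw [intervalIntegral.integral_const_mul, h.uint]
    _ ≤ _ := by
        apply mul_le_mul_of_nonneg_left _ (Real.sqrt_nonneg _)
        linarith [h4 1 h1m, (h.hu k ⟨le_rfl, hk1.le⟩).1]

end
lemma coef_bound {N : ℕ} {τ kstar : ℝ} {a b : ℝ → ℝ} (hab : A3 N τ kstar a b) :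
    ∃ L1 > 0, ∀ᶠ ε in nhdsWithin (0:ℝ) (Ioi 0), ∀ s ∈ Icc kstar 1,
      |deriv a (s / ε) / ε| ≤ L1 ∧ |deriv b (s / ε) / ε| ≤ L1 ∧
      |deriv (deriv a) (s / ε) / ε ^ 2| ≤ L1 := by
  obtain ⟨ha, hb, -, -, -, -, -, hk, L, hL, hT⟩ := hab
  refine ⟨L + 1, by linarith, ?_⟩
  have ca' : Continuous (deriv a) := ha.continuous_deriv (by norm_num)
  have ca'' : Continuous (deriv (deriv a)) := by
    have h2 : ContDiff ℝ 1 (deriv a) := ((contDiff_succ_iff_deriv (n := 1)).1 (by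
      simpa [one_add_one_eq_two] using ha)).2.2
    exact h2.continuous_deriv le_rfl
  have cb' : Continuous (deriv b) := hb.continuous_deriv le_rfl
  have hT' := hT.eventually (gt_mem_nhds (show L < L + 1 by linarith))
  have hε := tendsto_inv_nhdsGT_zero (𝕜 := ℝ) |>.eventually hT'
  filter_upwards [hε, self_mem_nhdsWithin] with ε h1 h0
  have h0 : 0 < ε := h0
  set R := ε⁻¹ with hR
  have hR0 : 0 < R := inv_pos.2 h0
  set φ : ℝ → ℝ := fun r => R * (|deriv a r| + |deriv b r|) + R ^ 2 * |deriv (deriv a) r| with hφ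
  have cφ : Continuous φ := by fun_prop
  have hbdd : BddAbove (φ '' Ico (kstar * R) R) :=
    ((isCompact_Icc.image cφ).bddAbove).mono (image_mono Ico_subset_Icc_self)
  have h2 : ∀ r ∈ Ico (kstar * R) R, φ r ≤ L + 1 := fun r hr =>
    (le_csSup hbdd (mem_image_of_mem φ hr)).trans h1.le
  have h3 : ∀ r ∈ Icc (kstar * R) R, φ r ≤ L + 1 := by
    have hne : kstar * R ≠ R := by nlinarith [hk.2]
    rw [← closure_Ico hne]
    exact fun r hr => closure_minimal (show Ico (kstar * R) R ⊆ {x | φ x ≤ L + 1} from h2)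
      (isClosed_le cφ continuous_const) hr
  intro s hs
  have h4 := h3 (s / ε) (by
    rw [div_eq_mul_inv]
    exact ⟨mul_le_mul_of_nonneg_right hs.1 hR0.le, by nlinarith [hs.2]⟩)
  simp only [hφ] at h4
  have e1 : |deriv a (s / ε) / ε| = R * |deriv a (s / ε)| := by
    rw [abs_div, abs_of_pos h0, hR]; ring
  have e2 : |deriv b (s / ε) / ε| = R * |deriv b (s / ε)| := by
    rw [abs_div, abs_of_pos h0, hR]; ring
  have e3 : |deriv (deriv a) (s / ε) / ε ^ 2| = R ^ 2 * |deriv (deriv a) (s / ε)| := by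
    rw [abs_div, abs_of_pos (by positivity : 0 < ε ^ 2), hR]; field_simp
  have p1 : 0 ≤ R * |deriv a (s / ε)| := by positivity
  have p2 : 0 ≤ R * |deriv b (s / ε)| := by positivity
  have p3 : 0 ≤ R ^ 2 * |deriv (deriv a) (s / ε)| := by positivity
  rw [e1, e2, e3]
  refine ⟨?_, ?_, ?_⟩ <;> linarith

lemma quot_bound {x y z w L M c : ℝ} (hc : 0 < c) (hy : c ≤ y) (hx : |x| ≤ L) (hz : |z| ≤ L)
    (hw : |w| ≤ M) (hyM : y ≤ M) : |(x * y - w * z) / y ^ 2| ≤ 2 * L * M / c ^ 2 := by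
  have hy0 : 0 < y := by linarith
  have hL : 0 ≤ L := (abs_nonneg _).trans hx
  have hM : 0 ≤ M := (abs_nonneg _).trans hw
  rw [abs_div, abs_of_pos (by positivity : 0 < y ^ 2)]
  apply div_le_div₀ (by positivity) _ (by positivity) (by nlinarith)
  calc |x * y - w * z| ≤ |x * y| + |w * z| := abs_sub _ _
    _ = |x| * y + |w| * |z| := by rw [abs_mul, abs_mul, abs_of_pos hy0]
    _ ≤ L * M + M * L := by
      apply add_le_add
      · exact mul_le_mul hx hyM hy0.le hL
      · exact mul_le_mul hw hz (abs_nonneg _) hM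
    _ = _ := by ring

lemma mk_fdat {θ₀ c : ℝ} {f : ℝ → ℝ} (hf : ContDiff ℝ 1 f) (h0 : f θ₀ = 0) (hc : 0 < c)
    (hd : ∀ t, c ≤ deriv f t) : FDat θ₀ c f (fun t => Fo f t - Fo f θ₀) where
  cf := hf.continuous
  mf := monotone_of_deriv_nonneg (hf.differentiable (by norm_num))
    fun t => hc.le.trans (hd t)
  f0 := h0
  lf := by
    intro t ht
    have := (convex_univ).mul_sub_le_image_sub_of_le_deriv (f := f) (C := c)
      hf.continuous.continuousOn (hf.differentiable (by norm_num)).differentiableOn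
      (fun x _ => hd x) θ₀ (mem_univ _) t (mem_univ _) ht
    linarith
  dG := fun t => (hf.continuous.integral_hasStrictDerivAt 0 t).hasDerivAt.sub_const _
  G0 := sub_self _

lemma mk_dat {N : ℕ} (hN : 2 ≤ N) {τ θ₀ kstar cf : ℝ} {f e a b G : ℝ → ℝ} (hcf : 0 < cf)
    (he : Antitone e) (hab : A3 N τ kstar a b) :
    ∃ K c : ℝ, 0 < c ∧ c ≤ cf ∧ ∀ᶠ ε in nhdsWithin (0:ℝ) (Ioi 0), ∀ u u' : ℝ → ℝ,
      IsSolE N f e a b θ₀ ε u u' → ∃ dm : ℝ → ℝ,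
      Dat kstar θ₀ K c (e θ₀) f G ε u u'
        (fun s => ((N:ℝ) - 1) / s + deriv (fun t : ℝ => a (t / ε)) s / a (s / ε))
        (fun s => b (s / ε) / a (s / ε)) dm := by
  obtain ⟨L1, hL1, hcoef⟩ := coef_bound hab
  obtain ⟨ha, hb, -, -, ⟨M, hM⟩, ⟨ca, hca, hca'⟩, -, hk, -⟩ := hab
  have hk0 := hk.1
  have hk1 := hk.2
  have hN1 : (0:ℝ) ≤ (N:ℝ) - 1 := by
    have : (2:ℝ) ≤ N := by exact_mod_cast hN
    linarith
  have hM0 : 0 < M := by linarith [(hca' 0 le_rfl).1, (hM 0 le_rfl).1]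
  have da : Differentiable ℝ a := ha.differentiable (by norm_num)
  have db : Differentiable ℝ b := hb.differentiable (by norm_num)
  have h2 : ContDiff ℝ 1 (deriv a) := ((contDiff_succ_iff_deriv (n := 1)).1 (by
      simpa [one_add_one_eq_two] using ha)).2.2
  have da' : Differentiable ℝ (deriv a) := h2.differentiable (by norm_num)
  have cb' : Continuous (deriv b) := hb.continuous_deriv le_rfl
  set K := (((N:ℝ) - 1) / kstar + L1 / ca) + (((N:ℝ) - 1) / kstar ^ 2 + 2 * L1 * (M + L1) / ca ^ 2)
    + M / ca with hK
  have p1 : 0 ≤ ((N:ℝ) - 1) / kstar := by positivity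
  have p2 : 0 ≤ L1 / ca := by positivity
  have p3 : 0 ≤ ((N:ℝ) - 1) / kstar ^ 2 := by positivity
  have p4 : 0 ≤ 2 * L1 * (M + L1) / ca ^ 2 := by positivity
  have p5 : 0 ≤ M / ca := by positivity
  refine ⟨K, min cf (ca / M), by positivity, min_le_left _ _, ?_⟩
  have hsm : ∀ᶠ ε in nhdsWithin (0:ℝ) (Ioi 0), ε ≤ 1 - kstar :=
    nhdsWithin_le_nhds (Iic_mem_nhds (by linarith))
  filter_upwards [hcoef, hsm, self_mem_nhdsWithin] with ε hco hεk hε u u' hsol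
  have hε : 0 < ε := hε
  obtain ⟨s1, s2, s3, -, s5, -, s7, s8⟩ := hsol
  have dA : ∀ s, HasDerivAt (fun t : ℝ => a (t / ε)) (deriv a (s / ε) / ε) s := fun s => by
    have := (da (s / ε)).hasDerivAt.comp s ((hasDerivAt_id s).div_const ε)
    refine this.congr_deriv (by ring)
  have dB : ∀ s, HasDerivAt (fun t : ℝ => b (t / ε)) (deriv b (s / ε) / ε) s := fun s => by
    have := (db (s / ε)).hasDerivAt.comp s ((hasDerivAt_id s).div_const ε)
    refine this.congr_deriv (by ring)
  have dA' : ∀ s, HasDerivAt (fun t : ℝ => deriv a (t / ε) / ε)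
      (deriv (deriv a) (s / ε) / ε ^ 2) s := fun s => by
    have := ((da' (s / ε)).hasDerivAt.comp s ((hasDerivAt_id s).div_const ε)).div_const ε
    refine this.congr_deriv (by field_simp)
  have eA : deriv (fun t : ℝ => a (t / ε)) = fun s => deriv a (s / ε) / ε :=
    funext fun s => (dA s).deriv
  have bA : ∀ s ∈ Icc kstar 1, ca ≤ a (s / ε) ∧ a (s / ε) ≤ M ∧ ca ≤ b (s / ε) ∧ b (s / ε) ≤ M := by
    intro s hs
    have h0 : 0 ≤ s / ε := div_nonneg (hk0.le.trans hs.1) hε.le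
    exact ⟨(hca' _ h0).1, (hM _ h0).1, (hca' _ h0).2, (hM _ h0).2⟩
  have hsub : ∀ s ∈ Ioo kstar 1, s ∈ Ioo (0:ℝ) 1 := fun s hs => ⟨hk0.trans hs.1, hs.2⟩
  have dg : ∀ s ∈ Icc kstar 1, HasDerivAt
      (fun s => ((N:ℝ) - 1) / s + deriv (fun t : ℝ => a (t / ε)) s / a (s / ε))
      (-(((N:ℝ) - 1) / s ^ 2) + (deriv (deriv a) (s / ε) / ε ^ 2 * a (s / ε) -
        deriv a (s / ε) / ε * (deriv a (s / ε) / ε)) / a (s / ε) ^ 2) s := by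
    intro s hs
    rw [eA]
    have hs0 : s ≠ 0 := (hk0.trans_le hs.1).ne'
    have i1 := ((hasDerivAt_inv hs0).const_mul ((N:ℝ) - 1))
    have i2 := (dA' s).div (dA s) (hca.trans_le (bA s hs).1).ne'
    have i3 := i1.add i2
    refine (i3.congr_deriv ?_).congr_of_eventuallyEq ?_
    · ring
    · exact Filter.Eventually.of_forall fun x => by simp [div_eq_mul_inv]
  have dmm : ∀ s ∈ Icc kstar 1, HasDerivAt (fun s => b (s / ε) / a (s / ε))
      ((deriv b (s / ε) / ε * a (s / ε) - b (s / ε) * (deriv a (s / ε) / ε)) / a (s / ε) ^ 2) s :=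
    fun s hs => (dB s).div (dA s) (hca.trans_le (bA s hs).1).ne'
  have bdg : ∀ s ∈ Icc kstar 1, |-(((N:ℝ) - 1) / s ^ 2) + (deriv (deriv a) (s / ε) / ε ^ 2 *
      a (s / ε) - deriv a (s / ε) / ε * (deriv a (s / ε) / ε)) / a (s / ε) ^ 2| ≤ K := by
    intro s hs
    have hs0 : 0 < s := hk0.trans_le hs.1
    obtain ⟨c1, c2, c3⟩ := hco s hs
    obtain ⟨d1, d2, d3, d4⟩ := bA s hs
    have q1 := quot_bound hca d1 c3 c1 (c1.trans (by linarith : L1 ≤ M + L1)) (by linarith)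
    have q2 : |-(((N:ℝ) - 1) / s ^ 2)| ≤ ((N:ℝ) - 1) / kstar ^ 2 := by
      rw [abs_neg, abs_of_nonneg (by positivity)]
      apply div_le_div_of_nonneg_left hN1 (by positivity)
      exact pow_le_pow_left₀ hk0.le hs.1 2
    refine (abs_add_le _ _).trans ?_
    linarith
  have bdm : ∀ s ∈ Icc kstar 1, |(deriv b (s / ε) / ε * a (s / ε) -
      b (s / ε) * (deriv a (s / ε) / ε)) / a (s / ε) ^ 2| ≤ K := by
    intro s hs
    obtain ⟨c1, c2, c3⟩ := hco s hs
    obtain ⟨d1, d2, d3, d4⟩ := bA s hs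
    have q1 := quot_bound (M := M + L1) hca d1 c2 c1
      (by rw [abs_of_pos (by linarith)]; linarith : |b (s / ε)| ≤ M + L1) (by linarith)
    linarith
  have m1 : (1:ℝ) ∈ Icc kstar 1 := ⟨hk1.le, le_rfl⟩
  have lip : ∀ (φ φ' : ℝ → ℝ), (∀ s ∈ Icc kstar 1, HasDerivAt φ (φ' s) s) →
      (∀ s ∈ Icc kstar 1, |φ' s| ≤ K) → ∀ s ∈ Icc kstar 1, |φ s - φ 1| ≤ K * (1 - s) := by
    intro φ φ' h1 h2 s hs
    have := (convex_Icc kstar 1).norm_image_sub_le_of_norm_hasDerivWithin_le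
      (fun x hx => (h1 x hx).hasDerivWithinAt) (fun x hx => (Real.norm_eq_abs _).trans_le (h2 x hx))
      m1 hs
    rw [Real.norm_eq_abs, Real.norm_eq_abs, abs_sub_comm s, abs_of_nonneg (a := 1 - s) (by linarith [hs.2])]
      at this
    exact this
  refine ⟨fun s => (deriv b (s / ε) / ε * a (s / ε) -
      b (s / ε) * (deriv a (s / ε) / ε)) / a (s / ε) ^ 2, ?_⟩
  refine
   { hε := hε
     hεk := hεk
     cu := s1.mono (Icc_subset_Icc hk0.le le_rfl)
     du := fun s hs => (s2 s ⟨(hsub s hs).1, hs.2.le⟩).hasDerivAt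
       (Icc_mem_nhds (hsub s hs).1 hs.2)
     cu' := s3.mono fun s hs => ⟨hk0.trans_le hs.1, hs.2⟩
     du' := ?_
     cg := fun s hs => (dg s hs).continuousAt.continuousWithinAt
     cm := fun s hs => (dmm s hs).continuousAt.continuousWithinAt
     cdm := ?_
     hdm := fun s hs => dmm s ⟨hs.1.le, hs.2.le⟩
     bg := ?_
     bm := ?_
     bdm := bdm
     lg := lip _ _ dg bdg
     lm := lip _ _ dmm bdm
     hu := fun s hs => s8 s ⟨hk0.le.trans hs.1, hs.2⟩
     he := ?_ }
  · intro s hs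
    obtain ⟨d, hd, heq⟩ := s5 s (hsub s hs)
    refine hd.congr_deriv ?_
    rw [← heq]
    field_simp
    ring
  · have hA : ContinuousOn (fun s => a (s / ε)) (Icc kstar 1) :=
      fun s _ => (dA s).continuousAt.continuousWithinAt
    have hB : ContinuousOn (fun s => b (s / ε)) (Icc kstar 1) :=
      fun s _ => (dB s).continuousAt.continuousWithinAt
    have hA' : ContinuousOn (fun s => deriv a (s / ε) / ε) (Icc kstar 1) :=
      fun s _ => (dA' s).continuousAt.continuousWithinAt
    have hB' : ContinuousOn (fun s => deriv b (s / ε) / ε) (Icc kstar 1) :=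
      (by fun_prop : Continuous (fun s => deriv b (s / ε) / ε)).continuousOn
    exact ((hB'.mul hA).sub (hB.mul hA')).div (hA.pow 2)
      fun s hs => pow_ne_zero 2 (hca.trans_le (bA s hs).1).ne'
  · intro s hs
    have hs0 : 0 < s := hk0.trans_le hs.1
    obtain ⟨c1, c2, c3⟩ := hco s hs
    obtain ⟨d1, d2, d3, d4⟩ := bA s hs
    rw [eA]
    have q1 : |((N:ℝ) - 1) / s| ≤ ((N:ℝ) - 1) / kstar := by
      rw [abs_of_nonneg (by positivity)]
      exact div_le_div_of_nonneg_left hN1 hk0 hs.1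
    have q2 : |deriv a (s / ε) / ε / a (s / ε)| ≤ L1 / ca := by
      rw [abs_div _ (a (s / ε)), abs_of_pos (hca.trans_le d1)]
      exact div_le_div₀ hL1.le c1 hca d1
    refine (abs_add_le _ _).trans ?_
    linarith
  · intro s hs
    obtain ⟨d1, d2, d3, d4⟩ := bA s hs
    constructor
    · refine (min_le_right _ _).trans ?_
      exact div_le_div₀ (by linarith) d3 (by linarith) d2
    · have : b (s / ε) / a (s / ε) ≤ M / ca := div_le_div₀ hM0.le d4 hca d1
      show b (s / ε) / a (s / ε) ≤ K
      linarith
  · rw [s7]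
    exact he (s8 1 ⟨zero_le_one, le_rfl⟩).1

lemma FDat.strictMonoG {θ₀ c : ℝ} {f G : ℝ → ℝ} (hc : 0 < c) (h : FDat θ₀ c f G) :
    StrictMonoOn G (Ici θ₀) := by
  apply strictMonoOn_of_deriv_pos (convex_Ici _) h.cG.continuousOn
  rw [interior_Ici]
  intro x hx
  rw [(h.dG x).deriv]
  have hx : θ₀ < x := hx
  have := h.lf x hx.le
  nlinarith

/-- precise leading term of `ε ∫_{k*}^1 ((N−1)/s + α_ε'/α_ε)(u_ε')² ds`. -/
theorem stmt_18 (N : ℕ) (hN : 2 ≤ N) (τ θ₀ kstar μ₀ p₀ : ℝ) (hτ : τ ∈ Set.Ioo (0:ℝ) 1)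
    (f e a b : ℝ → ℝ) (hf : A1 τ θ₀ f) (he : A2 τ e) (hab : A3 N τ kstar a b)
    (hμ : 0 < μ₀)
    (hβα : Tendsto (fun ε : ℝ => b (1 / ε) / a (1 / ε))
      (nhdsWithin (0:ℝ) (Set.Ioi 0)) (nhds μ₀))
    (hp : θ₀ < p₀) (hpe : e p₀ = Real.sqrt (2 * μ₀ * (Fo f p₀ - Fo f θ₀)))
    (u u' : ℝ → ℝ → ℝ)
    (hu : ∀ ε > 0, IsSolE N f e a b θ₀ ε (u ε) (u' ε)) :
    Tendsto (fun ε : ℝ =>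
      ε * (∫ s in kstar..(1:ℝ),
        (((N:ℝ) - 1) / s + deriv (fun t : ℝ => a (t / ε)) s / a (s / ε)) * (u' ε s) ^ 2)
      - Real.sqrt μ₀ * (((N:ℝ) - 1) + deriv (fun t : ℝ => a (t / ε)) 1 / a (1 / ε)) *
        ∫ t in θ₀..p₀, Real.sqrt (2 * (Fo f t - Fo f θ₀)))
      (nhdsWithin (0:ℝ) (Set.Ioi 0)) (nhds 0) := by
  obtain ⟨hf1, -, ⟨cf, hcf, hcf'⟩, hf0⟩ := hf
  obtain ⟨he1, -, hea, hepos⟩ := he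
  have hk := hab.2.2.2.2.2.2.2.1
  have hk0 := hk.1
  have hk1 := hk.2
  set G : ℝ → ℝ := fun t => Fo f t - Fo f θ₀ with hG
  obtain ⟨K, c, hc, hccf, hev⟩ := mk_dat (θ₀ := θ₀) (f := f) (G := G) hN hcf hea hab
  have hF : FDat θ₀ c f G := mk_fdat hf1 hf0 hc fun t => hccf.trans (hcf' t)
  set D := Real.exp K * e θ₀ with hD
  set C2 := (e θ₀ + K * D) / c with hC2
  set C3 := C2 / c with hC3
  set C4 := C3 + D with hC4
  set C6 := (D + C2) * C4 with hC6
  set C7 := (1 + K) * C6 / (1 - kstar) + K * C6 with hC7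
  set fm := f (θ₀ + C4) with hfm
  set η : ℝ → ℝ := fun ε => 2 * (C7 * ε) + 2 * (K * (fm * (C3 * ε))) +
    2 * (|b (1 / ε) / a (1 / ε) - μ₀| * (fm * C4)) with hη
  have hε0 : Tendsto (fun ε : ℝ => ε) (nhdsWithin (0:ℝ) (Ioi 0)) (nhds 0) := nhdsWithin_le_nhds
  have hη0 : Tendsto η (nhdsWithin (0:ℝ) (Ioi 0)) (nhds 0) := by
    have t1 := (hβα.sub_const μ₀).abs
    have t2 := (((hε0.const_mul C7).const_mul 2).add
      ((((hε0.const_mul C3).const_mul fm).const_mul K).const_mul 2)).add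
      ((t1.mul_const (fm * C4)).const_mul 2)
    simpa [hη] using t2
  -- pointwise energy estimate
  have hpt : ∀ᶠ ε in nhdsWithin (0:ℝ) (Ioi 0), ∀ s ∈ Icc kstar 1,
      |(ε * u' ε s) ^ 2 - 2 * μ₀ * G (u ε s)| ≤ η ε := by
    filter_upwards [hev, self_mem_nhdsWithin] with ε hd hε s hs
    have hε : 0 < ε := hε
    obtain ⟨dm, d⟩ := hd _ _ (hu ε hε)
    have hE := d.energy hk0 hc hF (d.hint hk0 hc hF) s hs
    have hw := d.wpt hk0 hc hF s hs
    have hb := d.wbd hk0 hc hF s hs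
    have hm := d.lm s hs
    have hK : 0 ≤ K := (abs_nonneg _).trans (d.bg s hs)
    have hus := (d.hu s hs).1
    have hGs := hF.bG hus
    have hfs : f (u ε s) ≤ fm := hF.mf (by linarith)
    have hf0' := hF.fnn hus
    have hw0 : 0 ≤ u ε s - θ₀ := by linarith
    have hs1 : 0 ≤ 1 - s := by linarith [hs.2]
    have k1 : (1 - s) * G (u ε s) ≤ fm * (C3 * ε) := by
      calc (1 - s) * G (u ε s) ≤ (1 - s) * (f (u ε s) * (u ε s - θ₀)) :=
            mul_le_mul_of_nonneg_left hGs.2 hs1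
        _ = f (u ε s) * ((1 - s) * (u ε s - θ₀)) := by ring
        _ ≤ fm * (C3 * ε) := mul_le_mul hfs hw (mul_nonneg hs1 hw0) (hf0'.trans hfs)
    have k2 : G (u ε s) ≤ fm * C4 :=
      hGs.2.trans (mul_le_mul hfs hb hw0 (hf0'.trans hfs))
    have k3 : |(b (s / ε) / a (s / ε) - μ₀) * G (u ε s)| ≤
        K * (fm * (C3 * ε)) + |b (1 / ε) / a (1 / ε) - μ₀| * (fm * C4) := by
      rw [abs_mul, abs_of_nonneg hGs.1]
      have : |b (s / ε) / a (s / ε) - μ₀| ≤ K * (1 - s) + |b (1 / ε) / a (1 / ε) - μ₀| :=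
        (abs_sub_le _ (b (1 / ε) / a (1 / ε)) _).trans (add_le_add hm le_rfl)
      calc _ ≤ (K * (1 - s) + |b (1 / ε) / a (1 / ε) - μ₀|) * G (u ε s) :=
            mul_le_mul_of_nonneg_right this hGs.1
        _ = K * ((1 - s) * G (u ε s)) + |b (1 / ε) / a (1 / ε) - μ₀| * G (u ε s) := by ring
        _ ≤ _ := add_le_add (mul_le_mul_of_nonneg_left k1 hK)
            (mul_le_mul_of_nonneg_left k2 (abs_nonneg _))
    have k4 : (ε * u' ε s) ^ 2 - 2 * μ₀ * G (u ε s) =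
        2 * ((ε * u' ε s) ^ 2 / 2 - b (s / ε) / a (s / ε) * G (u ε s)) +
        2 * ((b (s / ε) / a (s / ε) - μ₀) * G (u ε s)) := by ring
    rw [k4]
    refine (abs_add_le _ _).trans ?_
    rw [abs_mul, abs_mul, abs_two]
    simp only [hη]
    have hE' : |(ε * u' ε s) ^ 2 / 2 - b (s / ε) / a (s / ε) * G (u ε s)| ≤ C7 * ε := hE
    linarith
  have m1 : (1:ℝ) ∈ Icc kstar 1 := ⟨hk1.le, le_rfl⟩
  have mk : kstar ∈ Icc kstar 1 := ⟨le_rfl, hk1.le⟩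
  have hge : ∀ᶠ ε in nhdsWithin (0:ℝ) (Ioi 0), θ₀ ≤ u ε 1 := by
    filter_upwards [self_mem_nhdsWithin] with ε hε
    exact ((hu ε hε).2.2.2.2.2.2.2 1 ⟨zero_le_one, le_rfl⟩).1
  -- boundary value
  set H : ℝ → ℝ := fun t => e t ^ 2 - 2 * μ₀ * G t with hH
  have hHanti : StrictAntiOn H (Ici θ₀) := by
    intro x hx y hy hxy
    have g1 := hF.strictMonoG hc hx hy hxy
    have g2 := hea hxy.le
    have g3 := hepos y
    have g4 : μ₀ * G x < μ₀ * G y := mul_lt_mul_of_pos_left g1 hμ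
    simp only [hH]
    nlinarith
  have hHp : H p₀ = 0 := by
    simp only [hH]
    rw [hpe, Real.sq_sqrt (mul_nonneg (by linarith) (hF.bG hp.le).1)]
    simp [hG]
  have hH0 : Tendsto (fun ε => H (u ε 1)) (nhdsWithin (0:ℝ) (Ioi 0)) (nhds 0) := by
    apply squeeze_zero_norm' _ hη0
    filter_upwards [hpt, self_mem_nhdsWithin] with ε h1 hε
    have := h1 1 m1
    rw [(hu ε hε).2.2.2.2.2.2.1] at this
    exact this
  have hu1 : Tendsto (fun ε => u ε 1) (nhdsWithin (0:ℝ) (Ioi 0)) (nhds p₀) := by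
    rw [tendsto_order]
    constructor
    · intro q hq
      have hq' : max q θ₀ < p₀ := max_lt hq hp
      have h1 : 0 < H (max q θ₀) := by
        rw [← hHp]; exact hHanti (le_max_right q θ₀) hp.le hq'
      filter_upwards [hH0.eventually (gt_mem_nhds h1), hge] with ε h2 h3
      by_contra hcon
      push Not at hcon
      have := hHanti.antitoneOn h3 (le_max_right q θ₀) (hcon.trans (le_max_left q θ₀))
      linarith
    · intro q hq
      have hq' : q ∈ Ici θ₀ := (hp.trans hq).le
      have h1 : H q < 0 := by
        rw [← hHp]; exact hHanti hp.le hq' hq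
      filter_upwards [hH0.eventually (lt_mem_nhds h1), hge] with ε h2 h3
      by_contra hcon
      push Not at hcon
      have := hHanti.antitoneOn hq' h3 hcon
      linarith
  have huk : Tendsto (fun ε => u ε kstar) (nhdsWithin (0:ℝ) (Ioi 0)) (nhds θ₀) := by
    have hup : Tendsto (fun ε : ℝ => θ₀ + C3 * ε / (1 - kstar)) (nhdsWithin (0:ℝ) (Ioi 0))
        (nhds θ₀) := by
      simpa using ((hε0.const_mul C3).div_const (1 - kstar)).const_add θ₀
    refine tendsto_of_tendsto_of_tendsto_of_le_of_le' tendsto_const_nhds hup ?_ ?_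
    · filter_upwards [self_mem_nhdsWithin] with ε hε
      exact ((hu ε hε).2.2.2.2.2.2.2 kstar ⟨hk0.le, hk1.le⟩).1
    · filter_upwards [hev, self_mem_nhdsWithin] with ε hd hε
      obtain ⟨dm, d⟩ := hd _ _ (hu ε hε)
      have hw := d.wpt hk0 hc hF kstar mk
      have : u ε kstar - θ₀ ≤ C3 * ε / (1 - kstar) := by
        rw [le_div_iff₀ (by linarith)]; linarith
      linarith
  set Φ : ℝ → ℝ := fun x => ∫ t in θ₀..x, Real.sqrt (2 * G t) with hΦ
  have cS : Continuous fun t => Real.sqrt (2 * G t) := (continuous_const.mul hF.cG).sqrt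
  have cΦ : Continuous Φ :=
    continuous_iff_continuousAt.2 fun t =>
      (cS.integral_hasStrictDerivAt θ₀ t).hasDerivAt.continuousAt
  have hΦ0 : Φ θ₀ = 0 := by simp [hΦ]
  have hΦt : Tendsto (fun ε => |Φ (u ε 1) - Φ (u ε kstar) - Φ p₀|) (nhdsWithin (0:ℝ) (Ioi 0))
      (nhds 0) := by
    have := (((cΦ.tendsto p₀).comp hu1).sub ((cΦ.tendsto θ₀).comp huk)).sub_const (Φ p₀) |>.abs
    simpa [hΦ0] using this
  have hsη : Tendsto (fun ε => Real.sqrt (η ε)) (nhdsWithin (0:ℝ) (Ioi 0)) (nhds 0) := by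
    simpa using hη0.sqrt
  have hB : Tendsto (fun ε => K * D * C3 * ε + K * (Real.sqrt (η ε) * C4) +
      K * (Real.sqrt μ₀ * |Φ (u ε 1) - Φ (u ε kstar) - Φ p₀|)) (nhdsWithin (0:ℝ) (Ioi 0))
      (nhds 0) := by
    simpa using ((hε0.const_mul (K * D * C3)).add ((hsη.mul_const C4).const_mul K)).add
      ((hΦt.const_mul (Real.sqrt μ₀)).const_mul K)
  apply squeeze_zero_norm' _ hB
  filter_upwards [hev, hpt, self_mem_nhdsWithin] with ε hd hpe' hε
  obtain ⟨dm, d⟩ := hd _ _ (hu ε hε)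
  have r1 := d.gint hk0 hc hF
  have r2 := d.vint hF hμ hpe' (d.wbd hk0 hc hF)
  have r3 := d.bg 1 m1
  simp only [div_one] at r1 r3
  set g1 := ((N:ℝ) - 1) + deriv (fun t : ℝ => a (t / ε)) 1 / a (1 / ε) with hg1
  set I1 := ∫ s in kstar..(1:ℝ),
        (((N:ℝ) - 1) / s + deriv (fun t : ℝ => a (t / ε)) s / a (s / ε)) * (u' ε s) ^ 2 with hI1
  set I2 := ∫ s in kstar..(1:ℝ), (u' ε s) ^ 2 with hI2
  have r2' : |ε * I2 - Real.sqrt μ₀ * (Φ (u ε 1) - Φ (u ε kstar))| ≤ Real.sqrt (η ε) * C4 := r2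
  have hK : 0 ≤ K := (abs_nonneg _).trans r3
  have split : ε * I1 - Real.sqrt μ₀ * g1 * Φ p₀ = (ε * I1 - g1 * (ε * I2)) +
      g1 * (ε * I2 - Real.sqrt μ₀ * (Φ (u ε 1) - Φ (u ε kstar))) +
      g1 * (Real.sqrt μ₀ * (Φ (u ε 1) - Φ (u ε kstar) - Φ p₀)) := by ring
  rw [Real.norm_eq_abs]
  change |ε * I1 - Real.sqrt μ₀ * g1 * Φ p₀| ≤ _
  rw [split]
  refine (abs_add_le _ _).trans (add_le_add ((abs_add_le _ _).trans (add_le_add r1 ?_)) ?_)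
  · rw [abs_mul]
    exact mul_le_mul r3 r2' (abs_nonneg _) hK
  · rw [abs_mul, abs_mul, abs_of_nonneg (Real.sqrt_nonneg μ₀)]
    exact mul_le_mul_of_nonneg_right r3 (by positivity)
end
end
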